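/- There exists a universal constant c > 0 such that the following holds. Let X be an isotropic random vector in ℝⁿ with log-concave density which is ψ_α (α ∈ [1,2]) with constant b_α, and let A be an n×n real matrix with ‖A‖_HS² = n. Set ñ := n/(‖A‖_op²·b_α²). Then P(|AX| ≥ (1+t)√n) ≤ exp(−c·ñ^{α/2}·min(t^{2+α}, t)) for all t ≥ 0. -/

import Mathlib

open MeasureTheory ProbabilityTheory Real
open scoped ENNReal RealInnerProductSpace Pointwise NNReal

noncomputable section

/-- A nonnegative function is log-concave if `f(λx+(1-λ)y) ≥ f(x)^λ f(y)^{1-λ}`. -/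
def IsLogConcaveFn {E : Type*} [AddCommGroup E] [Module ℝ E] (f : E → ℝ) : Prop :=
  (∀ x, 0 ≤ f x) ∧
  ∀ x y : E, ∀ l : ℝ, 0 ≤ l → l ≤ 1 →
    f x ^ l * f y ^ (1 - l) ≤ f (l • x + (1 - l) • y)

/-- Hilbert-Schmidt (Frobenius) norm of a matrix. -/
def hsNorm {n : ℕ} (A : Matrix (Fin n) (Fin n) ℝ) : ℝ :=
  Real.sqrt (∑ i, ∑ j, (A i j) ^ 2)

/-- Operator norm of a matrix acting on Euclidean space. -/
def opNorm {n : ℕ} (A : Matrix (Fin n) (Fin n) ℝ) : ℝ :=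
  ‖LinearMap.toContinuousLinearMap (Matrix.toEuclideanLin A)‖

/-- Application of a matrix to a Euclidean vector. -/
def mApp {n : ℕ} (A : Matrix (Fin n) (Fin n) ℝ) (x : EuclideanSpace ℝ (Fin n)) :
    EuclideanSpace ℝ (Fin n) := Matrix.toEuclideanLin A x

/-- The random vector `X` has density `f` with respect to Lebesgue measure. -/
def HasDensityFn {Ω : Type*} [MeasurableSpace Ω] (P : Measure Ω) {n : ℕ}
    (X : Ω → EuclideanSpace ℝ (Fin n)) (f : EuclideanSpace ℝ (Fin n) → ℝ) : Prop :=
  Measurable X ∧ Measure.map X P = volume.withDensity fun x => ENNReal.ofReal (f x)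

/-- `X` is isotropic: centered with identity covariance. -/
def Isotropic {Ω : Type*} [MeasurableSpace Ω] (P : Measure Ω) {n : ℕ}
    (X : Ω → EuclideanSpace ℝ (Fin n)) : Prop :=
  (∫ ω, X ω ∂P) = 0 ∧
  ∀ θ η : EuclideanSpace ℝ (Fin n), (∫ ω, ⟪X ω, θ⟫ * ⟪X ω, η⟫ ∂P) = ⟪θ, η⟫

/-- `X` is ψ_α with constant `b`. -/
def IsPsiAlpha {Ω : Type*} [MeasurableSpace Ω] (P : Measure Ω) {n : ℕ}
    (X : Ω → EuclideanSpace ℝ (Fin n)) (α b : ℝ) : Prop :=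
  ∀ p : ℝ, 2 ≤ p → ∀ y : EuclideanSpace ℝ (Fin n),
    (∫ ω, |⟪X ω, y⟫| ^ p ∂P) ^ (1/p) ≤ b * p ^ (1/α) * (∫ ω, ⟪X ω, y⟫ ^ 2 ∂P) ^ ((1:ℝ)/2)

/-- `G` is a standard Gaussian random vector in `ℝⁿ`. -/
def IsStdGaussian {Ω : Type*} [MeasurableSpace Ω] (P : Measure Ω) {n : ℕ}
    (G : Ω → EuclideanSpace ℝ (Fin n)) : Prop :=
  Measurable G ∧
  Measure.map G P = volume.withDensity fun x =>
    ENNReal.ofReal ((2 * π) ^ (-(n:ℝ)/2) * Real.exp (-‖x‖ ^ 2 / 2))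

/-- Surface area of the unit sphere `S^{k-1}` in `ℝᵏ`. -/
def sphereVol (k : ℕ) : ℝ := 2 * π ^ ((k : ℝ)/2) / Real.Gamma ((k : ℝ)/2)

/-- The marginal density `π_F g(x) = ∫_{F^⊥} g(x+y) dy`. -/
def marginalDensity {n : ℕ} (g : EuclideanSpace ℝ (Fin n) → ℝ)
    (F : Submodule ℝ (EuclideanSpace ℝ (Fin n))) (x : EuclideanSpace ℝ (Fin n)) : ℝ :=
  ∫ y : Fᗮ, g (x + y)

/-- `h_{k,p}(u) = vol(S^{k-1}) ∫₀^∞ t^{p+k-1} π_{u(E₀)} g(t u(θ₀)) dt`. -/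
def hkp {n : ℕ} (g : EuclideanSpace ℝ (Fin n) → ℝ)
    (E₀ : Submodule ℝ (EuclideanSpace ℝ (Fin n))) (θ₀ : EuclideanSpace ℝ (Fin n))
    (k : ℕ) (p : ℝ) (u : Matrix (Fin n) (Fin n) ℝ) : ℝ :=
  sphereVol k * ∫ t in Set.Ioi (0:ℝ), t ^ (p + (k:ℝ) - 1) *
    marginalDensity g (Submodule.map (Matrix.toEuclideanLin u) E₀) (t • mApp u θ₀)

/-- Support functional of the one-sided L_q-centroid body `Z⁺_q(w)`. -/
def suppZplus {m : ℕ} (w : EuclideanSpace ℝ (Fin m) → ℝ) (q : ℝ)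
    (y : EuclideanSpace ℝ (Fin m)) : ℝ :=
  (2 * ∫ x, (max ⟪x, y⟫ 0) ^ q * w x) ^ (1/q)

/-- Ball's body `K_q(w) = {x : q ∫₀^∞ t^{q-1} w(tx) dt ≥ 1}`. -/
def ballBody {m : ℕ} (w : EuclideanSpace ℝ (Fin m) → ℝ) (q : ℝ) :
    Set (EuclideanSpace ℝ (Fin m)) :=
  {x | 1 ≤ q * ∫ t in Set.Ioi (0:ℝ), t ^ (q-1) * w (t • x)}

/-- The one-sided L_q-centroid body `Z⁺_q(w)`, as the convex set with support
functional `suppZplus w q`. -/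
def ZplusBody {m : ℕ} (w : EuclideanSpace ℝ (Fin m) → ℝ) (q : ℝ) :
    Set (EuclideanSpace ℝ (Fin m)) :=
  {x | ∀ y, ⟪x, y⟫ ≤ suppZplus w q y}


/-- Prékopa–Leindler property with cost. -/
def PLc {W : Type*} [AddCommGroup W] [Module ℝ W] [MeasurableSpace W] (μ : Measure W)
    (c : W → W → ℝ≥0∞) : Prop :=
  ∀ u v w : W → ℝ≥0∞, Measurable u → Measurable v → Measurable w →
    (∀ x y, u x * v y ≤ c x y * w ((1/2:ℝ) • (x + y)) ^ 2) →
    (∫⁻ x, u x ∂μ) * (∫⁻ x, v x ∂μ) ≤ (∫⁻ x, w x ∂μ) ^ 2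

lemma bm_compact {A B : Set ℝ} {C : Set ℝ} (hA : IsCompact A) (hB : IsCompact B)
    (hA0 : A.Nonempty) (hB0 : B.Nonempty)
    (h : ∀ a ∈ A, ∀ b ∈ B, (a + b) / 2 ∈ C) :
    volume A + volume B ≤ 2 * volume C := by
  obtain ⟨a0, ha0, hamax⟩ := hA.exists_isGreatest hA0
  obtain ⟨b0, hb0, hbmin⟩ := hB.exists_isLeast hB0
  have h1 : volume ((fun x => x + b0) '' A) = volume A := by
    simp
  have h2 : volume ((fun x => a0 + x) '' B) = volume B := by
    simp
  have hD : volume ((fun x => (2:ℝ) * x) '' C) = 2 * volume C := by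
    have := Measure.addHaar_smul (volume : Measure ℝ) (2:ℝ) C
    rw [show (fun x => (2:ℝ) * x) '' C = (2:ℝ) • C from rfl, this]
    simp
  rw [← h1, ← h2, ← hD]
  have hdis : AEDisjoint volume ((fun x => x + b0) '' A) ((fun x => a0 + x) '' B) := by
    refine measure_mono_null (t := {a0 + b0}) ?_ (by simp)
    rintro z ⟨⟨x, hx, rfl⟩, ⟨y, hy, hxy⟩⟩
    have := hamax hx
    have := hbmin hy
    simp only [Set.mem_singleton_iff] at *
    linarith
  rw [← measure_union₀ _ hdis]
  · refine measure_mono ?_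
    rintro z (⟨x, hx, rfl⟩ | ⟨y, hy, rfl⟩)
    · exact ⟨_, h x hx b0 hb0, by ring⟩
    · exact ⟨_, h a0 ha0 y hy, by ring⟩
  · exact (hB.image (by fun_prop)).measurableSet.nullMeasurableSet

lemma bm_meas {A B : Set ℝ} {C : Set ℝ} (hA : MeasurableSet A) (hB : MeasurableSet B)
    (hA0 : A.Nonempty) (hB0 : B.Nonempty)
    (h : ∀ a ∈ A, ∀ b ∈ B, (a + b) / 2 ∈ C) :
    volume A + volume B ≤ 2 * volume C := by
  obtain ⟨a, ha⟩ := hA0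
  obtain ⟨b, hb⟩ := hB0
  have key : ∀ K ⊆ A, IsCompact K → ∀ L ⊆ B, IsCompact L → volume K + volume L ≤ 2 * volume C := by
    intro K hK hKc L hL hLc
    have := bm_compact (A := insert a K) (B := insert b L) (C := C) (hKc.insert a) (hLc.insert b)
      (by simp) (by simp) (by
        intro x hx y hy
        refine h x ?_ y ?_
        · rcases hx with rfl | hx
          exacts [ha, hK hx]
        · rcases hy with rfl | hy
          exacts [hb, hL hy])
    refine le_trans ?_ this
    gcongr <;> exact Set.subset_insert _ _
  have key2 : ∀ L ⊆ B, IsCompact L → volume A + volume L ≤ 2 * volume C := by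
    intro L hL hLc
    have : volume A ≤ 2 * volume C - volume L := by
      rw [hA.measure_eq_iSup_isCompact]
      refine iSup₂_le fun K hK => iSup_le fun hKc => ?_
      exact ENNReal.le_sub_of_add_le_right hLc.measure_lt_top.ne (key K hK hKc L hL hLc)
    have h2 : volume L ≤ 2 * volume C := le_trans le_add_self (key ∅ (by simp) (by simp) L hL hLc)
    calc volume A + volume L ≤ (2 * volume C - volume L) + volume L := by gcongr
      _ = _ := tsub_add_cancel_of_le h2
  by_cases hAt : volume A = ∞
  · have := key2 ∅ (by simp) (by simp)
    rw [hAt] at this ⊢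
    simp at this
    simp [this]
  have h1 : volume B ≤ 2 * volume C - volume A := by
    rw [hB.measure_eq_iSup_isCompact]
    refine iSup₂_le fun K hK => iSup_le fun hKc => ?_
    refine ENNReal.le_sub_of_add_le_left hAt (key2 K hK hKc)
  have h2 : volume A ≤ 2 * volume C := le_trans le_self_add (key2 ∅ (by simp) (by simp))
  calc volume A + volume B ≤ volume A + (2 * volume C - volume A) := by gcongr
    _ = _ := add_tsub_cancel_of_le h2

lemma pl_normalized {u v w : ℝ → ℝ≥0∞} (hu : Measurable u) (hv : Measurable v) (hw : Measurable w)
    (hu1 : ∀ x, u x ≤ 1) (hv1 : ∀ x, v x ≤ 1) (hus : ∀ t < 1, ∃ x, t < u x)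
    (hvs : ∀ t < 1, ∃ x, t < v x)
    (h : ∀ x y, u x * v y ≤ w ((x + y) / 2) ^ 2) :
    (∫⁻ x, u x) + (∫⁻ x, v x) ≤ 2 * ∫⁻ x, w x := by
  have cake : ∀ f : ℝ → ℝ≥0∞, Measurable f → (∀ x, f x ≤ 1) →
      ∫⁻ x, f x = ∫⁻ t in Set.Ioi (0:ℝ), volume {x | ENNReal.ofReal t < f x} := by
    intro f hf hf1
    have hft : ∀ x, f x ≠ ∞ := fun x => ((hf1 x).trans_lt (by simp)).ne
    have h1 := lintegral_eq_lintegral_meas_lt (volume : Measure ℝ) (f := fun x => (f x).toReal)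
      (Filter.Eventually.of_forall fun x => ENNReal.toReal_nonneg)
      (hf.ennreal_toReal.aemeasurable)
    simp only [ENNReal.ofReal_toReal (hft _)] at h1
    rw [h1]
    refine setLIntegral_congr_fun measurableSet_Ioi fun t ht => ?_
    congr 1
    ext x
    simp only [Set.mem_ofPred_eq]
    rw [ENNReal.ofReal_lt_iff_lt_toReal (le_of_lt ht) (hft x)]
  have hw1 : Measurable (fun x => min (w x) 1) := hw.min measurable_const
  refine le_trans ?_ (mul_le_mul_right (lintegral_mono (fun x => min_le_left (w x) 1)) 2)
  rw [cake u hu hu1, cake v hv hv1, cake _ hw1 (fun x => min_le_right _ _)]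
  have hm : ∀ f : ℝ → ℝ≥0∞, Measurable fun t : ℝ => volume {x | ENNReal.ofReal t < f x} := by
    intro f
    have : Antitone fun t : ℝ => volume {x | ENNReal.ofReal t < f x} := by
      intro s t hst
      refine measure_mono fun x hx => ?_
      exact lt_of_le_of_lt (ENNReal.ofReal_le_ofReal hst) hx
    exact this.measurable
  rw [← lintegral_const_mul _ (hm _), ← lintegral_add_left (hm _)]
  refine setLIntegral_mono' measurableSet_Ioi fun t ht => ?_
  by_cases ht1 : 1 ≤ t
  · have : ∀ f : ℝ → ℝ≥0∞, (∀ x, f x ≤ 1) → {x | ENNReal.ofReal t < f x} = ∅ := by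
      intro f hf
      ext x
      simp only [Set.mem_ofPred_eq, Set.mem_empty_iff_false, iff_false, not_lt]
      exact (hf x).trans (by simpa using ht1)
    rw [this u hu1, this v hv1]
    simp
  push Not at ht1
  have ht1' : ENNReal.ofReal t < 1 := by simpa using ht1
  obtain ⟨a, ha⟩ := hus _ ht1'
  obtain ⟨b, hb⟩ := hvs _ ht1'
  refine bm_meas (measurableSet_lt measurable_const hu) (measurableSet_lt measurable_const hv)
    ⟨a, ha⟩ ⟨b, hb⟩ ?_
  intro x hx y hy
  simp only [Set.mem_ofPred_eq] at *
  refine lt_min ?_ ht1'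
  have h3 : ENNReal.ofReal t ^ 2 < w ((x + y) / 2) ^ 2 := by
    refine lt_of_lt_of_le ?_ (h x y)
    rw [sq]
    exact ENNReal.mul_lt_mul hx hy
  exact lt_of_pow_lt_pow_left' 2 h3

lemma ennreal_amgm (a b : ℝ≥0∞) : 4 * (a * b) ≤ (a + b) ^ 2 := by
  by_cases ha : a = ∞
  · simp [ha]
  by_cases hb : b = ∞
  · simp [hb]
  lift a to ℝ≥0 using ha
  lift b to ℝ≥0 using hb
  norm_cast
  rw [← NNReal.coe_le_coe]
  push_cast
  nlinarith [sq_nonneg ((a:ℝ) - b)]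

lemma pl_bounded {u v w : ℝ → ℝ≥0∞} (hu : Measurable u) (hv : Measurable v) (hw : Measurable w)
    (hut : ⨆ x, u x ≠ ∞) (hvt : ⨆ x, v x ≠ ∞)
    (h : ∀ x y, u x * v y ≤ w ((x + y) / 2) ^ 2) :
    (∫⁻ x, u x) * (∫⁻ x, v x) ≤ (∫⁻ x, w x) ^ 2 := by
  set a := ⨆ x, u x with ha
  set b := ⨆ x, v x with hb
  by_cases ha0 : a = 0
  · have : ∀ x, u x = 0 := by
      intro x
      have := le_iSup u x
      rw [← ha, ha0] at this
      simpa using this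
    simp [this]
  by_cases hb0 : b = 0
  · have : ∀ x, v x = 0 := by
      intro x
      have := le_iSup v x
      rw [← hb, hb0] at this
      simpa using this
    simp [this]
  set s := (a * b) ^ (1/2:ℝ) with hs
  have hs2 : s ^ 2 = a * b := by
    rw [hs, ← ENNReal.rpow_natCast, ← ENNReal.rpow_mul]; norm_num
  have hab0 : a * b ≠ 0 := mul_ne_zero ha0 hb0
  have habt : a * b ≠ ∞ := ENNReal.mul_ne_top hut hvt
  have key := pl_normalized (u := fun x => a⁻¹ * u x) (v := fun x => b⁻¹ * v x)
    (w := fun x => s⁻¹ * w x) (hu.const_mul _) (hv.const_mul _) (hw.const_mul _)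
    (fun x => by
      rw [mul_comm, ← div_eq_mul_inv]
      exact ENNReal.div_le_of_le_mul (by simpa using le_iSup u x))
    (fun x => by
      rw [mul_comm, ← div_eq_mul_inv]
      exact ENNReal.div_le_of_le_mul (by simpa using le_iSup v x))
    (by
      intro t ht
      have : t * a < ⨆ x, u x := by
        rw [← ha]
        calc t * a < 1 * a := by
              exact ENNReal.mul_lt_mul_left ha0 hut ht
          _ = a := one_mul a
      obtain ⟨x, hx⟩ := lt_iSup_iff.1 this
      refine ⟨x, ?_⟩
      rw [mul_comm, ← div_eq_mul_inv]
      exact (ENNReal.lt_div_iff_mul_lt (Or.inl ha0) (Or.inl hut)).2 hx)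
    (by
      intro t ht
      have : t * b < ⨆ x, v x := by
        rw [← hb]
        calc t * b < 1 * b := by
              exact ENNReal.mul_lt_mul_left hb0 hvt ht
          _ = b := one_mul b
      obtain ⟨x, hx⟩ := lt_iSup_iff.1 this
      refine ⟨x, ?_⟩
      rw [mul_comm, ← div_eq_mul_inv]
      exact (ENNReal.lt_div_iff_mul_lt (Or.inl hb0) (Or.inl hvt)).2 hx)
    (by
      intro x y
      rw [mul_pow, ← ENNReal.inv_pow, hs2, ENNReal.mul_inv (Or.inl ha0) (Or.inl hut)]
      calc a⁻¹ * u x * (b⁻¹ * v y) = a⁻¹ * b⁻¹ * (u x * v y) := by ring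
        _ ≤ _ := by gcongr; exact h x y)
  rw [lintegral_const_mul _ hu, lintegral_const_mul _ hv, lintegral_const_mul _ hw] at key
  have k2 := (ennreal_amgm _ _).trans (pow_le_pow_left' key 2)
  have k3 : 4 * ((a * b)⁻¹ * ((∫⁻ x, u x) * (∫⁻ x, v x))) ≤ 4 * ((a*b)⁻¹ * (∫⁻ x, w x) ^ 2) := by
    calc _ = 4 * (a⁻¹ * (∫⁻ x, u x) * (b⁻¹ * (∫⁻ x, v x))) := by
            rw [ENNReal.mul_inv (Or.inl ha0) (Or.inl hut)]; ring
      _ ≤ _ := k2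
      _ = _ := by rw [← hs2, ENNReal.inv_pow]; ring
  rw [ENNReal.mul_le_mul_iff_right (by simp) (by simp)] at k3
  rwa [ENNReal.mul_le_mul_iff_right (by simpa using habt) (by simpa using ⟨ha0, hb0⟩)] at k3

lemma iSup_min_nat (a : ℝ≥0∞) : ⨆ N : ℕ, min a N = a := by
  rw [← inf_iSup_eq, ENNReal.iSup_natCast]; simp

lemma PL_real : PLc (volume : Measure ℝ) (fun _ _ => 1) := by
  intro u v w hu hv hw h
  have h' : ∀ x y, u x * v y ≤ w ((x + y) / 2) ^ 2 := by
    intro x y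
    have := h x y
    rw [one_mul] at this
    convert this using 3
    simp; ring
  have lim : ∀ f : ℝ → ℝ≥0∞, Measurable f → ∫⁻ x, f x = ⨆ N : ℕ, ∫⁻ x, min (f x) N := by
    intro f hf
    rw [← lintegral_iSup (fun N => hf.min measurable_const)]
    · simp_rw [iSup_min_nat]
    · intro N M hNM x
      simp only
      gcongr
  rw [lim u hu, lim v hv, ENNReal.iSup_mul]
  refine iSup_le fun N => ?_
  rw [ENNReal.mul_iSup]
  refine iSup_le fun M => ?_
  refine pl_bounded (hu.min measurable_const) (hv.min measurable_const) hw ?_ ?_ ?_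
  · exact ((iSup_le fun x => min_le_right _ _).trans_lt (ENNReal.natCast_lt_top N)).ne
  · exact ((iSup_le fun x => min_le_right _ _).trans_lt (ENNReal.natCast_lt_top M)).ne
  · intro x y
    refine le_trans ?_ (h' x y)
    gcongr <;> exact min_le_left _ _

section
variable {W W' : Type*} [AddCommGroup W] [Module ℝ W] [MeasurableSpace W]
  [AddCommGroup W'] [Module ℝ W'] [MeasurableSpace W']

lemma PLc.map {μ : Measure W} {c : W → W → ℝ≥0∞} (hμ : PLc μ c) {f : W → W'} (hf : Measurable f)
    (hadd : ∀ x y, f ((1/2:ℝ) • (x + y)) = (1/2:ℝ) • (f x + f y)) {c' : W' → W' → ℝ≥0∞}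
    (hc : ∀ x y, c' (f x) (f y) ≤ c x y) : PLc (μ.map f) c' := by
  intro u v w hu hv hw h
  rw [lintegral_map hu hf, lintegral_map hv hf, lintegral_map hw hf]
  refine hμ _ _ _ (hu.comp hf) (hv.comp hf) (hw.comp hf) fun x y => ?_
  rw [hadd]
  refine (h _ _).trans ?_
  gcongr
  exact hc x y

lemma PLc.withDensity {μ : Measure W} {c : W → W → ℝ≥0∞} (hμ : PLc μ c) {g : W → ℝ≥0∞}
    (hg : Measurable g) {c' : W → W → ℝ≥0∞}
    (hc : ∀ x y, g x * g y * c' x y ≤ c x y * g ((1/2:ℝ) • (x + y)) ^ 2) :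
    PLc (μ.withDensity g) c' := by
  intro u v w hu hv hw h
  rw [lintegral_withDensity_eq_lintegral_mul _ hg hu, lintegral_withDensity_eq_lintegral_mul _ hg hv,
    lintegral_withDensity_eq_lintegral_mul _ hg hw]
  refine hμ _ _ _ (hg.mul hu) (hg.mul hv) (hg.mul hw) fun x y => ?_
  simp only [Pi.mul_apply]
  calc g x * u x * (g y * v y) = g x * g y * (u x * v y) := by ring
    _ ≤ g x * g y * (c' x y * w ((1/2:ℝ) • (x + y)) ^ 2) := by exact mul_le_mul_right (h x y) _
    _ = (g x * g y * c' x y) * w ((1/2:ℝ) • (x + y)) ^ 2 := by ring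
    _ ≤ (c x y * g ((1/2:ℝ) • (x + y)) ^ 2) * w ((1/2:ℝ) • (x + y)) ^ 2 := by
      exact mul_le_mul_left (hc x y) _
    _ = _ := by ring

lemma PLc.prod {μ : Measure W} {ν : Measure W'} [SFinite μ] [SFinite ν] {c : W → W → ℝ≥0∞}
    {c' : W' → W' → ℝ≥0∞} (hμ : PLc μ c) (hν : PLc ν c') :
    PLc (μ.prod ν) (fun x y => c x.1 y.1 * c' x.2 y.2) := by
  intro u v w hu hv hw h
  rw [lintegral_prod _ hu.aemeasurable, lintegral_prod _ hv.aemeasurable,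
    lintegral_prod _ hw.aemeasurable]
  refine hμ _ _ _ hu.lintegral_prod_right' hv.lintegral_prod_right' hw.lintegral_prod_right'
    fun x y => ?_
  have hs2 : (c x y ^ (1/2:ℝ)) ^ 2 = c x y := by
    rw [← ENNReal.rpow_natCast, ← ENNReal.rpow_mul]; norm_num
  have := hν (fun z => u (x, z)) (fun z => v (y, z))
    (fun z => c x y ^ (1/2:ℝ) * w ((1/2:ℝ) • (x + y), z)) (by fun_prop) (by fun_prop)
    (by fun_prop) (fun z z' => by
      have := h (x, z) (y, z')
      rw [mul_pow, hs2]
      refine this.trans (le_of_eq ?_)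
      simp only [Prod.mk_add_mk, Prod.smul_mk]
      ring)
  rw [lintegral_const_mul _ (by fun_prop), mul_pow, hs2] at this
  exact this

lemma PLc.pi {μ : Measure W} [SigmaFinite μ] {c : W → W → ℝ≥0∞} (hμ : PLc μ c) (n : ℕ) :
    PLc (Measure.pi fun _ : Fin n => μ) (fun x y => ∏ i, c (x i) (y i)) := by
  induction n with
  | zero =>
    intro u v w hu hv hw h
    rw [Measure.pi_of_empty, lintegral_dirac' _ hu, lintegral_dirac' _ hv, lintegral_dirac' _ hw]
    have := h isEmptyElim isEmptyElim
    simp only [Finset.univ_eq_empty, Finset.prod_empty, one_mul] at this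
    convert this using 3
  | succ n ih =>
    have := ((measurePreserving_piFinSuccAbove (fun _ : Fin (n+1) => μ) 0).symm).map_eq
    rw [← this]
    refine (hμ.prod ih).map (MeasurableEquiv.measurable _) ?_ ?_
    · rintro ⟨x, x'⟩ ⟨y, y'⟩
      funext i
      refine Fin.cases ?_ (fun i => ?_) i
      · simp [MeasurableEquiv.piFinSuccAbove]
      · simp [MeasurableEquiv.piFinSuccAbove]
    · rintro ⟨x, x'⟩ ⟨y, y'⟩
      simp [Fin.prod_univ_succ, MeasurableEquiv.piFinSuccAbove]
end

/-- Prékopa–Leindler property without cost. -/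
def PL1 {W : Type*} [AddCommGroup W] [Module ℝ W] [MeasurableSpace W] (μ : Measure W) : Prop :=
  PLc μ (fun _ _ => 1)

lemma PL_euclid (n : ℕ) : PL1 (volume : Measure (EuclideanSpace ℝ (Fin n))) := by
  have h := PL_real.pi n
  rw [← (PiLp.volume_preserving_toLp (Fin n)).map_eq]
  rw [volume_pi]
  refine PLc.map (c := fun x y => ∏ i : Fin n, 1) h ?_ ?_ ?_
  · exact (PiLp.volume_preserving_toLp (Fin n)).measurable
  · intro x y
    simp [WithLp.toLp_smul, WithLp.toLp_add]
  · intro x y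
    simp

lemma PL_logconcave {n : ℕ} {f : EuclideanSpace ℝ (Fin n) → ℝ} (hf : IsLogConcaveFn f) :
    PL1 ((volume : Measure (EuclideanSpace ℝ (Fin n))).withDensity
      (fun x => ENNReal.ofReal (f x))) := by
  obtain ⟨hf0, hf⟩ := hf
  set C := {x | 0 < f x} with hC
  have hlc : ConcaveOn ℝ C (fun x => Real.log (f x)) := by
    have hconv : ∀ x ∈ C, ∀ y ∈ C, ∀ l m : ℝ, 0 ≤ l → 0 ≤ m → l + m = 1 →
        0 < f x ^ l * f y ^ m ∧ f x ^ l * f y ^ m ≤ f (l • x + m • y) := by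
      intro x hx y hy l m hl hm hlm
      have hm' : m = 1 - l := by linarith
      subst hm'
      exact ⟨mul_pos (Real.rpow_pos_of_pos hx _) (Real.rpow_pos_of_pos hy _),
        hf x y l hl (by linarith)⟩
    refine ⟨?_, ?_⟩
    · intro x hx y hy l m hl hm hlm
      obtain ⟨h1, h2⟩ := hconv x hx y hy l m hl hm hlm
      exact lt_of_lt_of_le h1 h2
    · intro x hx y hy l m hl hm hlm
      obtain ⟨h1, h2⟩ := hconv x hx y hy l m hl hm hlm
      have := Real.log_le_log h1 h2
      rw [Real.log_mul (Real.rpow_pos_of_pos hx _).ne' (Real.rpow_pos_of_pos hy _).ne',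
        Real.log_rpow hx, Real.log_rpow hy] at this
      simpa using this
  have hcont : ContinuousOn f (interior C) := by
    have h1 := (hlc.continuousOn_interior).rexp
    refine h1.congr fun x hx => ?_
    have : x ∈ C := interior_subset hx
    exact (Real.exp_log this).symm
  set g : EuclideanSpace ℝ (Fin n) → ℝ := (interior C).indicator f with hg
  have hgm : Measurable g := by
    refine measurable_of_restrict_of_restrict_compl (s := interior C) isOpen_interior.measurableSet ?_ ?_
    · rw [show (interior C).domRestrict g = (interior C).domRestrict f from
        funext fun x => Set.indicator_of_mem x.2 f]
      exact (continuousOn_iff_continuous_restrict.1 hcont).measurable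
    · rw [show (interior C)ᶜ.domRestrict g = fun _ => 0 from
        funext fun x => Set.indicator_of_notMem x.2 f]
      exact measurable_const
  have hae : (fun x => ENNReal.ofReal (f x)) =ᵐ[volume] (fun x => ENNReal.ofReal (g x)) := by
    have hnull := hlc.1.addHaar_frontier (volume : Measure (EuclideanSpace ℝ (Fin n)))
    filter_upwards [compl_mem_ae_iff.2 hnull] with x hx
    by_cases h : x ∈ interior C
    · simp [hg, h]
    · have : x ∉ C := fun hxC => hx ⟨subset_closure hxC, h⟩
      have h0 : f x = 0 := le_antisymm (not_lt.1 this) (hf0 x)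
      simp [hg, h, h0]
  rw [withDensity_congr_ae hae]
  refine (PL_euclid n).withDensity hgm.ennreal_ofReal ?_
  intro x y
  rw [mul_one, one_mul]
  by_cases hx : x ∈ interior C
  swap
  · simp [hg, hx]
  by_cases hy : y ∈ interior C
  swap
  · simp [hg, hy]
  have hmid : (1/2:ℝ) • (x + y) ∈ interior C := by
    have := hlc.1.interior hx hy (a := 1/2) (b := 1/2) (by norm_num) (by norm_num) (by norm_num)
    rwa [← smul_add] at this
  simp only [hg, Set.indicator_of_mem hx, Set.indicator_of_mem hy, Set.indicator_of_mem hmid]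
  rw [← ENNReal.ofReal_mul (hf0 x), ← ENNReal.ofReal_pow (hf0 _)]
  refine ENNReal.ofReal_le_ofReal ?_
  have := hf x y (1/2) (by norm_num) (by norm_num)
  have e : (1/2:ℝ) • x + (1 - 1/2 : ℝ) • y = (1/2:ℝ) • (x + y) := by
    rw [smul_add]; norm_num
  rw [e] at this
  calc f x * f y = (f x ^ (1/2:ℝ) * f y ^ (1 - 1/2:ℝ)) ^ 2 := by
        rw [mul_pow, ← Real.rpow_natCast, ← Real.rpow_natCast, ← Real.rpow_mul (hf0 x),
          ← Real.rpow_mul (hf0 y)]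
        norm_num
    _ ≤ _ := by
        refine pow_le_pow_left₀ (mul_nonneg (Real.rpow_nonneg (hf0 _) _) (Real.rpow_nonneg (hf0 _) _)) this 2

lemma PL_gaussianReal : PLc (gaussianReal 0 1)
    (fun x y => ENNReal.ofReal (Real.exp ((x - y) ^ 2 / 4))) := by
  rw [gaussianReal_of_var_ne_zero _ (by simp)]
  refine PL_real.withDensity (measurable_gaussianPDF _ _) ?_
  intro x y
  simp only [gaussianPDF, one_mul]
  rw [← ENNReal.ofReal_mul (gaussianPDFReal_nonneg _ _ _), ← ENNReal.ofReal_mul (by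
    exact mul_nonneg (gaussianPDFReal_nonneg _ _ _) (gaussianPDFReal_nonneg _ _ _)),
    ← ENNReal.ofReal_pow (gaussianPDFReal_nonneg _ _ _)]
  refine ENNReal.ofReal_le_ofReal (le_of_eq ?_)
  simp only [gaussianPDFReal]
  rw [mul_pow, ← Real.exp_nat_mul]
  rw [show ∀ a b c d : ℝ, a * b * (a * c) * d = a ^ 2 * (b * c * d) by intros; ring, ← Real.exp_add,
    ← Real.exp_add]
  congr 2
  simp
  ring

/-- The Gaussian measure on `k × n` matrices (as `k` rows). -/
def gamM (k n : ℕ) : Measure (Fin k → EuclideanSpace ℝ (Fin n)) :=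
  Measure.pi fun _ => stdGaussian (EuclideanSpace ℝ (Fin n))

instance (k n : ℕ) : IsProbabilityMeasure (gamM k n) := by
  unfold gamM; infer_instance

lemma PL_stdGaussian (n : ℕ) : PLc (stdGaussian (EuclideanSpace ℝ (Fin n)))
    (fun x y => ENNReal.ofReal (Real.exp (‖x - y‖ ^ 2 / 4))) := by
  rw [← map_pi_eq_stdGaussian]
  refine (PL_gaussianReal.pi n).map (by fun_prop) ?_ ?_
  · intro x y
    simp [WithLp.toLp_smul, WithLp.toLp_add]
  · intro x y
    rw [← ENNReal.ofReal_prod_of_nonneg (fun _ _ => (Real.exp_pos _).le), ← Real.exp_sum]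
    refine ENNReal.ofReal_le_ofReal (le_of_eq ?_)
    rw [EuclideanSpace.norm_sq_eq, Finset.sum_div]
    simp

lemma PL_gamM (k n : ℕ) : PLc (gamM k n)
    (fun x y => ENNReal.ofReal (Real.exp ((∑ i, ‖x i - y i‖ ^ 2) / 4))) := by
  have := (PL_stdGaussian n).pi k
  refine (cast (congrArg _ ?_) this)
  funext x y
  rw [← ENNReal.ofReal_prod_of_nonneg (fun _ _ => (Real.exp_pos _).le), ← Real.exp_sum,
    Finset.sum_div]

lemma gauss_scalar (N : ℝ) (hN : 0 < N) (a : ℝ) (v : ℝ≥0) :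
    ∫⁻ x, ENNReal.ofReal (Real.exp (-(a - x) ^ 2 / (2 * N))) ∂(gaussianReal 0 v) =
      ENNReal.ofReal (Real.sqrt (N / (N + v)) * Real.exp (-a ^ 2 / (2 * (N + v)))) := by
  by_cases hv : v = 0
  · subst hv
    rw [gaussianReal_zero_var, lintegral_dirac' _ (by fun_prop)]
    simp [hN.ne']
  have hv' : 0 < (v:ℝ) := by positivity
  rw [gaussianReal_of_var_ne_zero _ hv, lintegral_withDensity_eq_lintegral_mul _
    (measurable_gaussianPDF _ _) (by fun_prop)]
  obtain ⟨s, hs⟩ : ∃ s : ℝ≥0, (s:ℝ) = N * v / (N + v) :=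
    ⟨Real.toNNReal (N * v / (N + v)), Real.coe_toNNReal _ (by positivity)⟩
  have hs0 : s ≠ 0 := by
    intro h
    have h0 : (s:ℝ) = 0 := by rw [h]; rfl
    have : 0 < N * v / (N + v) := by positivity
    linarith
  have key : ∀ x : ℝ, (gaussianPDF 0 v * fun x => ENNReal.ofReal (Real.exp (-(a - x) ^ 2 / (2 * N)))) x
      = ENNReal.ofReal (Real.sqrt (N / (N + v)) * Real.exp (-a ^ 2 / (2 * (N + v)))) *
        gaussianPDF (a * v / (N + v)) s x := by
    intro x
    simp only [Pi.mul_apply, gaussianPDF]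
    rw [← ENNReal.ofReal_mul (gaussianPDFReal_nonneg _ _ _), ← ENNReal.ofReal_mul (by positivity)]
    congr 1
    simp only [gaussianPDFReal]
    rw [mul_assoc, ← Real.exp_add, show ∀ a b c d : ℝ, a * b * (c * d) = (a * c) * (b * d) by
      intros; ring, ← Real.exp_add]
    congr 1
    · rw [hs]
      rw [← Real.sqrt_inv, ← Real.sqrt_inv, ← Real.sqrt_mul (by positivity)]
      congr 1
      field_simp
    · congr 1
      rw [hs]
      field_simp
      ring
  rw [lintegral_congr key, lintegral_const_mul _ (measurable_gaussianPDF _ _),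
    lintegral_gaussianPDF_eq_one _ hs0, mul_one]

lemma map_inner_stdGaussian {n : ℕ} (y : EuclideanSpace ℝ (Fin n)) :
    (stdGaussian (EuclideanSpace ℝ (Fin n))).map (fun g => ⟪g, y⟫) =
      gaussianReal 0 (‖y‖ ^ 2).toNNReal := by
  have := IsGaussian.map_eq_gaussianReal (μ := stdGaussian (EuclideanSpace ℝ (Fin n)))
    (innerSL ℝ y)
  rw [integral_strongDual_stdGaussian, variance_dual_stdGaussian] at this
  rw [show (fun g => ⟪g, y⟫) = (innerSL ℝ y : EuclideanSpace ℝ (Fin n) → ℝ) by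
    funext g; simp [real_inner_comm]]
  rw [this]
  congr 1
  ext
  simp

lemma gauss_vec {n : ℕ} (N : ℝ) (hN : 0 < N) (a : ℝ) (y : EuclideanSpace ℝ (Fin n)) :
    ∫⁻ g, ENNReal.ofReal (Real.exp (-(a - ⟪g, y⟫) ^ 2 / (2 * N)))
      ∂(stdGaussian (EuclideanSpace ℝ (Fin n))) =
      ENNReal.ofReal (Real.sqrt (N / (N + ‖y‖ ^ 2)) * Real.exp (-a ^ 2 / (2 * (N + ‖y‖ ^ 2)))) := by
  rw [← lintegral_map (f := fun x => ENNReal.ofReal (Real.exp (-(a - x) ^ 2 / (2 * N))))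
    (g := fun g => ⟪g, y⟫) (by fun_prop) (by fun_prop), map_inner_stdGaussian, gauss_scalar N hN,
    Real.coe_toNNReal _ (by positivity)]

lemma lintegral_pi_prod {α : Type*} [MeasurableSpace α] (μ : Measure α) [SigmaFinite μ] (k : ℕ)
    (f : Fin k → α → ℝ≥0∞) (hf : ∀ i, Measurable (f i)) :
    ∫⁻ x, ∏ i, f i (x i) ∂(Measure.pi fun _ : Fin k => μ) = ∏ i, ∫⁻ x, f i x ∂μ := by
  induction k with
  | zero => simp [Measure.pi_of_empty]
  | succ k ih =>
    have := ((measurePreserving_piFinSuccAbove (fun _ : Fin (k+1) => μ) 0).symm)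
    rw [← this.map_eq, lintegral_map (by fun_prop) this.measurable]
    simp only [MeasurableEquiv.piFinSuccAbove, Fin.prod_univ_succ]
    rw [← ih _ (fun i => hf i.succ), ← lintegral_prod_mul (hf 0).aemeasurable
      (Measurable.aemeasurable (by fun_prop))]
    simp

/-- Integral of the kernel over the Gaussian matrix. -/
lemma gauss_mat {k n : ℕ} (N : ℝ) (hN : 0 < N) (a : Fin k → ℝ) (y : EuclideanSpace ℝ (Fin n)) :
    ∫⁻ g, ENNReal.ofReal (Real.exp (-(∑ i, (a i - ⟪g i, y⟫) ^ 2) / (2 * N))) ∂(gamM k n) =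
      ENNReal.ofReal (Real.sqrt (N / (N + ‖y‖ ^ 2)) ^ k *
        Real.exp (-(∑ i, a i ^ 2) / (2 * (N + ‖y‖ ^ 2)))) := by
  have h1 : ∀ g : Fin k → EuclideanSpace ℝ (Fin n),
      ENNReal.ofReal (Real.exp (-(∑ i, (a i - ⟪g i, y⟫) ^ 2) / (2 * N))) =
      ∏ i, ENNReal.ofReal (Real.exp (-(a i - ⟪g i, y⟫) ^ 2 / (2 * N))) := by
    intro g
    rw [← ENNReal.ofReal_prod_of_nonneg (fun _ _ => (Real.exp_pos _).le), ← Real.exp_sum,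
      ← Finset.sum_div, Finset.sum_neg_distrib]
  rw [lintegral_congr h1, gamM, lintegral_pi_prod _ _
    (fun i g => ENNReal.ofReal (Real.exp (-(a i - ⟪g, y⟫) ^ 2 / (2 * N)))) (fun i => by fun_prop)]
  simp_rw [gauss_vec N hN]
  rw [← ENNReal.ofReal_prod_of_nonneg (fun _ _ => by positivity), Finset.prod_mul_distrib,
    ← Real.exp_sum, ← Finset.sum_div, Finset.sum_neg_distrib]
  simp

/-- Squared distance from `x` to the image of `y` under the matrix with rows `Γ`. -/
def Qf {k n : ℕ} (Γ : Fin k → EuclideanSpace ℝ (Fin n)) (x : Fin k → ℝ)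
    (y : EuclideanSpace ℝ (Fin n)) : ℝ := ∑ i, (x i - ⟪Γ i, y⟫) ^ 2

/-- Gaussian kernel. -/
def Kf {k n : ℕ} (N : ℝ) (Γ : Fin k → EuclideanSpace ℝ (Fin n)) (x : Fin k → ℝ)
    (y : EuclideanSpace ℝ (Fin n)) : ℝ≥0∞ := ENNReal.ofReal (Real.exp (-(Qf Γ x y) / (2 * N)))

/-- Smoothed marginal. -/
def Ff {k n : ℕ} (N : ℝ) (ν : Measure (EuclideanSpace ℝ (Fin n)))
    (Γ : Fin k → EuclideanSpace ℝ (Fin n)) (x : Fin k → ℝ) : ℝ≥0∞ := ∫⁻ y, Kf N Γ x y ∂ν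

section
variable {k n : ℕ}
local notation "EE" => EuclideanSpace ℝ (Fin n)

lemma Qf_nonneg (Γ : Fin k → EE) (x : Fin k → ℝ) (y : EE) : 0 ≤ Qf Γ x y :=
  Finset.sum_nonneg fun _ _ => sq_nonneg _

@[fun_prop]
lemma measurable_Qf {α : Type*} [MeasurableSpace α] {g : α → Fin k → EE} {x : α → Fin k → ℝ}
    {y : α → EE} (hg : Measurable g) (hx : Measurable x) (hy : Measurable y) :
    Measurable (fun a => Qf (g a) (x a) (y a)) := by
  unfold Qf
  refine Finset.measurable_sum _ fun i _ => ?_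
  have h1 : Measurable fun a => x a i := (measurable_pi_apply i).comp hx
  have h2 : Measurable fun a => g a i := (measurable_pi_apply i).comp hg
  have h3 : Measurable fun a => ⟪g a i, y a⟫ := h2.inner hy
  exact (h1.sub h3).pow_const 2

@[fun_prop]
lemma measurable_Kf {α : Type*} [MeasurableSpace α] {N : ℝ} {g : α → Fin k → EE} {x : α → Fin k → ℝ}
    {y : α → EE} (hg : Measurable g) (hx : Measurable x) (hy : Measurable y) :
    Measurable (fun a => Kf N (g a) (x a) (y a)) := by
  unfold Kf
  fun_prop

lemma Qf_mid (Γ : Fin k → EE) (x x' : Fin k → ℝ) (y y' : EE) (θ : ℝ) (hθ : 0 < θ) :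
    Qf Γ ((1/2:ℝ) • (x + x')) ((1/2:ℝ) • (y + y')) ≤
      (1 + θ) / 4 * Qf Γ x y + (1 + 1 / θ) / 4 * Qf Γ x' y' := by
  unfold Qf
  rw [Finset.mul_sum, Finset.mul_sum, ← Finset.sum_add_distrib]
  refine Finset.sum_le_sum fun i _ => ?_
  simp only [Pi.smul_apply, Pi.add_apply, smul_eq_mul, inner_smul_right, inner_add_right]
  generalize ⟪Γ i, y⟫ = a
  generalize ⟪Γ i, y'⟫ = b
  have h : 0 ≤ (θ * (x i - a) - (x' i - b)) ^ 2 / θ := by positivity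
  have e : (1 + θ) / 4 * (x i - a) ^ 2 + (1 + 1 / θ) / 4 * (x' i - b) ^ 2 -
      (1 / 2 * (x i + x' i) - 1 / 2 * (a + b)) ^ 2 =
      (θ * (x i - a) - (x' i - b)) ^ 2 / θ / 4 := by
    field_simp
    ring
  linarith

lemma Kf_mid {N : ℝ} (hN : 0 < N) (Γ : Fin k → EE) (x x' : Fin k → ℝ) (y y' : EE) :
    Kf N Γ x y * Kf N Γ x' y' ≤ Kf N Γ ((1/2:ℝ) • (x + x')) ((1/2:ℝ) • (y + y')) ^ 2 := by
  unfold Kf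
  rw [← ENNReal.ofReal_mul (by positivity), ← ENNReal.ofReal_pow (by positivity), ← Real.exp_add,
    ← Real.exp_nat_mul]
  refine ENNReal.ofReal_le_ofReal (Real.exp_le_exp.2 ?_)
  have := Qf_mid Γ x x' y y' 1 one_pos
  rw [← add_div, mul_div_assoc', div_le_div_iff_of_pos_right (by positivity)]
  push_cast
  linarith

lemma Ff_mid {N : ℝ} (hN : 0 < N) {ν : Measure EE} (hν : PL1 ν) (Γ : Fin k → EE)
    (x x' : Fin k → ℝ) :
    Ff N ν Γ x * Ff N ν Γ x' ≤ Ff N ν Γ ((1/2:ℝ) • (x + x')) ^ 2 := by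
  refine hν _ _ _ (by fun_prop) (by fun_prop) (by fun_prop) fun y y' => ?_
  rw [one_mul]
  exact Kf_mid hN Γ x x' y y'

lemma Ff_neg {N : ℝ} {ν : Measure EE} (hs : ν.map (fun y => -y) = ν) (Γ : Fin k → EE)
    (x : Fin k → ℝ) : Ff N ν Γ (-x) = Ff N ν Γ x := by
  unfold Ff
  conv_lhs => rw [← hs]
  rw [lintegral_map (by fun_prop) (by fun_prop)]
  refine lintegral_congr fun y => ?_
  unfold Kf Qf
  congr 5
  funext i
  simp only [Pi.neg_apply, inner_neg_right]
  ring

lemma Ff_le_zero {N : ℝ} (hN : 0 < N) {ν : Measure EE} (hν : PL1 ν)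
    (hs : ν.map (fun y => -y) = ν) (Γ : Fin k → EE) (x : Fin k → ℝ) :
    Ff N ν Γ x ≤ Ff N ν Γ 0 := by
  have h := Ff_mid hN hν Γ x (-x)
  rw [Ff_neg hs, add_neg_cancel, smul_zero, ← sq] at h
  exact (ENNReal.pow_le_pow_left_iff two_ne_zero).1 h

lemma Ff_half {N : ℝ} (hN : 0 < N) {ν : Measure EE} (hν : PL1 ν) (Γ : Fin k → EE)
    (x : Fin k → ℝ) : Ff N ν Γ x * Ff N ν Γ 0 ≤ Ff N ν Γ ((1/2:ℝ) • x) ^ 2 := by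
  have h := Ff_mid hN hν Γ x 0
  rwa [add_zero] at h

@[fun_prop]
lemma measurable_Ff {N : ℝ} {ν : Measure EE} [SFinite ν] {α : Type*} [MeasurableSpace α]
    {g : α → Fin k → EE} {x : α → Fin k → ℝ} (hg : Measurable g) (hx : Measurable x) :
    Measurable (fun a => Ff N ν (g a) (x a)) := by
  unfold Ff
  refine Measurable.lintegral_prod_right' (f := fun z : α × EE => Kf N (g z.1) (x z.1) z.2) ?_
  fun_prop

/-- total mass of the kernel -/
def kap (k : ℕ) (N : ℝ) : ℝ≥0∞ :=
  ∫⁻ z : Fin k → ℝ, ENNReal.ofReal (Real.exp (-(∑ i, z i ^ 2) / (2 * N)))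

lemma lint_smul {V : Type*} [NormedAddCommGroup V] [NormedSpace ℝ V] [MeasurableSpace V]
    [BorelSpace V] [FiniteDimensional ℝ V] (μ : Measure V) [μ.IsAddHaarMeasure]
    {g : V → ℝ≥0∞} (hg : Measurable g) {r : ℝ} (hr : 0 < r) :
    ∫⁻ z, g (r • z) ∂μ = ENNReal.ofReal (r⁻¹ ^ Module.finrank ℝ V) * ∫⁻ z, g z ∂μ := by
  have h : ∫⁻ z, g z ∂(Measure.map (r • ·) μ) = ∫⁻ z, g (r • z) ∂μ :=
    lintegral_map hg (measurable_const_smul r)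
  rw [← h, Measure.map_addHaar_smul μ hr.ne', lintegral_smul_measure, smul_eq_mul,
    abs_of_pos (by positivity), inv_pow]

lemma lint_half {g : (Fin k → ℝ) → ℝ≥0∞} (hg : Measurable g) (x : Fin k → ℝ) :
    ∫⁻ z, g ((1/2:ℝ) • (x + z)) = 2 ^ k * ∫⁻ z, g z := by
  rw [lintegral_add_left_eq_self (μ := (volume : Measure (Fin k → ℝ))) (fun z => g ((1/2:ℝ) • z)) x]
  rw [lint_smul _ hg (by norm_num), Module.finrank_fin_fun, ENNReal.ofReal_pow (by norm_num)]
  norm_num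

lemma kap_ne (N : ℝ) (hN : 0 < N) : kap k N ≠ 0 ∧ kap k N ≠ ∞ := by
  have h1 : kap k N = ∏ i : Fin k, ∫⁻ z : ℝ, ENNReal.ofReal (Real.exp (-z ^ 2 / (2 * N))) := by
    rw [← lintegral_pi_prod _ _ (fun _ z => ENNReal.ofReal (Real.exp (-z ^ 2 / (2 * N))))
      (fun i => by fun_prop)]
    unfold kap
    rw [volume_pi]
    refine lintegral_congr fun z => ?_
    rw [← ENNReal.ofReal_prod_of_nonneg (fun _ _ => (Real.exp_pos _).le), ← Real.exp_sum,
      ← Finset.sum_div, Finset.sum_neg_distrib]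
  rw [h1]
  have hintg : Integrable (fun z : ℝ => Real.exp (-z ^ 2 / (2 * N))) := by
    have := integrable_exp_neg_mul_sq (b := 1 / (2 * N)) (by positivity)
    refine this.congr (Filter.Eventually.of_forall fun z => ?_)
    simp only
    congr 1
    ring
  have hne : ∫⁻ z : ℝ, ENNReal.ofReal (Real.exp (-z ^ 2 / (2 * N))) ≠ ∞ :=
    hintg.lintegral_lt_top.ne
  have hn0 : ∫⁻ z : ℝ, ENNReal.ofReal (Real.exp (-z ^ 2 / (2 * N))) ≠ 0 := by
    rw [Ne, lintegral_eq_zero_iff (by fun_prop)]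
    intro h
    have : ∀ᵐ z : ℝ, False := by
      filter_upwards [h] with z hz
      simp only [Pi.zero_apply, ENNReal.ofReal_eq_zero] at hz
      exact absurd (Real.exp_pos _) (not_lt.2 hz)
    simp only [Filter.eventually_false_iff_eq_bot, ae_eq_bot] at this
    exact NeZero.ne _ this
  exact ⟨Finset.prod_ne_zero_iff.2 fun _ _ => hn0, ENNReal.prod_ne_top fun _ _ => hne⟩

lemma lint_Kf (N : ℝ) (Γ : Fin k → EE) (y : EE) : ∫⁻ z, Kf N Γ z y = kap k N := by
  unfold kap
  rw [← lintegral_add_right_eq_self (μ := (volume : Measure (Fin k → ℝ)))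
    (fun z => Kf N Γ z y) (fun i => ⟪Γ i, y⟫)]
  refine lintegral_congr fun z => ?_
  simp [Kf, Qf]

/-- The general tilting lemma. -/
lemma tilt_gen {N : ℝ} (hN : 0 < N) {ν : Measure EE} [SFinite ν] (hν : PL1 ν)
    (hs : ν.map (fun y => -y) = ν) (Γ : Fin k → EE) (x : Fin k → ℝ)
    (U : EE → ℝ≥0∞) (V W : (Fin k → ℝ) → EE → ℝ≥0∞) (hU : Measurable U)
    (hV : Measurable (Function.uncurry V)) (hW : Measurable (Function.uncurry W))
    (hVK : ∀ z y, V z y ≤ Kf N Γ z y)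
    (h : ∀ y z y', U y * V z y' ≤ W ((1/2:ℝ) • (x + z)) ((1/2:ℝ) • (y + y')) ^ 2) :
    (∫⁻ y, U y ∂ν) * (∫⁻ z, ∫⁻ y, V z y ∂ν) ^ 2 ≤
      Ff N ν Γ 0 * (2 ^ k * ∫⁻ z, ∫⁻ y, W z y ∂ν) ^ 2 := by
  have hVm : ∀ z, Measurable (V z) := fun z => hV.comp measurable_prodMk_left
  have hWm : ∀ z, Measurable (W z) := fun z => hW.comp measurable_prodMk_left
  have h1 : ∀ z, (∫⁻ y, U y ∂ν) * (∫⁻ y, V z y ∂ν) ≤ (∫⁻ y, W ((1/2:ℝ) • (x + z)) y ∂ν) ^ 2 := by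
    intro z
    refine hν _ _ _ hU (hVm z) (hWm _) fun y y' => ?_
    rw [one_mul]
    exact h y z y'
  have sqs : ∀ a : ℝ≥0∞, (a ^ (1/2:ℝ)) ^ 2 = a := by
    intro a
    rw [← ENNReal.rpow_natCast, ← ENNReal.rpow_mul]; norm_num
  set u := (∫⁻ y, U y ∂ν) ^ (1/2:ℝ) with hu
  set f0 := (Ff N ν Γ 0) ^ (1/2:ℝ) with hf0
  have h2 : ∀ z, u * (∫⁻ y, V z y ∂ν) ≤ f0 * ∫⁻ y, W ((1/2:ℝ) • (x + z)) y ∂ν := by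
    intro z
    have h3 : ∫⁻ y, V z y ∂ν ≤ Ff N ν Γ 0 :=
      (lintegral_mono (hVK z)).trans (Ff_le_zero hN hν hs Γ z)
    refine (ENNReal.pow_le_pow_left_iff two_ne_zero).1 ?_
    rw [mul_pow, mul_pow, hu, hf0, sqs, sqs, sq (∫⁻ y, V z y ∂ν), ← mul_assoc, mul_comm]
    exact mul_le_mul' h3 (h1 z)
  have h4 : u * (∫⁻ z, ∫⁻ y, V z y ∂ν) ≤ f0 * (2 ^ k * ∫⁻ z, ∫⁻ y, W z y ∂ν) := by
    have hWi : Measurable fun z => ∫⁻ y, W z y ∂ν := hW.lintegral_prod_right'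
    have hVi : Measurable fun z => ∫⁻ y, V z y ∂ν := hV.lintegral_prod_right'
    have hWi2 : Measurable fun z => ∫⁻ y, W ((1/2:ℝ) • (x + z)) y ∂ν :=
      hWi.comp (g := fun z => ∫⁻ y, W z y ∂ν) (f := fun z => (1/2:ℝ) • (x + z)) (by fun_prop)
    rw [← lint_half hWi x, ← lintegral_const_mul _ hVi, ← lintegral_const_mul _ hWi2]
    exact lintegral_mono h2
  have h5 := pow_le_pow_left' h4 2
  rwa [mul_pow, mul_pow, hu, hf0, sqs, sqs] at h5
end

lemma cs_lint {α : Type*} [MeasurableSpace α] (μ : Measure α) {f : α → ℝ≥0∞}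
    (hf : Measurable f) : (∫⁻ x, f x ∂μ) ^ 2 ≤ (∫⁻ x, f x ^ 2 ∂μ) * μ Set.univ := by
  have h := ENNReal.lintegral_mul_le_Lp_mul_Lq μ (p := 2) (q := 2) ⟨by norm_num, by norm_num, by norm_num⟩
    hf.aemeasurable (g := fun _ => 1) aemeasurable_const
  have h2 := pow_le_pow_left' h 2
  simp only [Pi.mul_apply, mul_one, ENNReal.one_rpow, lintegral_const, one_mul] at h2
  rw [mul_pow, ← ENNReal.rpow_natCast, ← ENNReal.rpow_natCast, ← ENNReal.rpow_natCast,
    ← ENNReal.rpow_mul, ← ENNReal.rpow_mul] at h2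
  norm_num at h2
  exact h2

section
variable {k n : ℕ}
local notation "EE" => EuclideanSpace ℝ (Fin n)

/-- the radial moment of the smoothed marginal -/
def Mf {k n : ℕ} (N : ℝ) (ν : Measure (EuclideanSpace ℝ (Fin n)))
    (Γ : Fin k → EuclideanSpace ℝ (Fin n)) (e : Fin k → ℝ) (d : ℕ) : ℝ≥0∞ :=
  ∫⁻ r : ℝ, ENNReal.ofReal r ^ d * Ff N ν Γ (r • e)

/-- the tilted measure -/
def tm {k n : ℕ} (N : ℝ) (ν : Measure (EuclideanSpace ℝ (Fin n)))
    (Γ : Fin k → EuclideanSpace ℝ (Fin n)) (e : Fin k → ℝ) (d : ℕ) :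
    Measure (ℝ × EuclideanSpace ℝ (Fin n)) :=
  (volume.prod ν).withDensity (fun z => ENNReal.ofReal z.1 ^ d * Kf N Γ (z.1 • e) z.2)

lemma tm_lint (N : ℝ) (ν : Measure EE) [SFinite ν] (Γ : Fin k → EE) (e : Fin k → ℝ) (d : ℕ)
    {w : ℝ × EE → ℝ≥0∞} (hw : Measurable w) :
    ∫⁻ z, w z ∂(tm N ν Γ e d) =
      ∫⁻ r : ℝ, ENNReal.ofReal r ^ d * ∫⁻ y, Kf N Γ (r • e) y * w (r, y) ∂ν := by
  unfold tm
  rw [lintegral_withDensity_eq_lintegral_mul _ (by fun_prop) hw,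
    lintegral_prod _ (Measurable.aemeasurable (by fun_prop))]
  refine lintegral_congr fun r => ?_
  simp only [Pi.mul_apply]
  rw [← lintegral_const_mul _ (by fun_prop)]
  simp only [mul_assoc]

lemma tm_univ (N : ℝ) (ν : Measure EE) [SFinite ν] (Γ : Fin k → EE) (e : Fin k → ℝ) (d : ℕ) :
    tm N ν Γ e d Set.univ = Mf N ν Γ e d := by
  rw [← lintegral_one, tm_lint N ν Γ e d measurable_const]
  simp [Mf, Ff]

lemma tilt_int {N : ℝ} (hN : 0 < N) {ν : Measure EE} [SFinite ν] (hν : PL1 ν)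
    (Γ : Fin k → EE) (e : Fin k → ℝ) (d : ℕ)
    {w : ℝ × EE → ℝ≥0∞} (hw : Measurable w) (C : ℝ≥0∞)
    (h : ∀ r : ℝ, ∫⁻ y, Kf N Γ (r • e) y * w (r, y) ^ 2 ∂ν ≤ C ^ 2 * Ff N ν Γ 0) :
    ∫⁻ z, w z ∂(tm N ν Γ e d) ≤ C * 2 ^ (d + 1) * Mf N ν Γ e d := by
  have h1 : ∀ r : ℝ, ∫⁻ y, Kf N Γ (r • e) y * w (r, y) ∂ν ≤ C * Ff N ν Γ ((1/2:ℝ) • r • e) := by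
    intro r
    refine (ENNReal.pow_le_pow_left_iff two_ne_zero).1 ?_
    have hwr : Measurable fun y => w (r, y) := by fun_prop
    have h2 := cs_lint (ν.withDensity (fun y => Kf N Γ (r • e) y)) hwr
    rw [lintegral_withDensity_eq_lintegral_mul _ (by fun_prop) hwr,
      lintegral_withDensity_eq_lintegral_mul _ (by fun_prop) (by fun_prop),
      withDensity_apply _ MeasurableSet.univ, Measure.restrict_univ] at h2
    simp only [Pi.mul_apply] at h2
    refine h2.trans ((mul_le_mul_left (h r) _).trans ?_)
    rw [mul_pow, mul_assoc]
    refine mul_le_mul_right ?_ _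
    rw [mul_comm]
    exact Ff_half hN hν Γ _
  rw [tm_lint N ν Γ e d hw]
  calc _ ≤ ∫⁻ r : ℝ, ENNReal.ofReal r ^ d * (C * Ff N ν Γ ((1/2:ℝ) • r • e)) :=
        lintegral_mono fun r => mul_le_mul_right (h1 r) _
    _ = ∫⁻ r : ℝ, (fun s : ℝ => (C * 2 ^ d) * (ENNReal.ofReal s ^ d * Ff N ν Γ (s • e))) ((1/2:ℝ) • r) := by
        refine lintegral_congr fun r => ?_
        have e1 : ENNReal.ofReal r = 2 * ENNReal.ofReal ((1/2:ℝ) • r) := by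
          rw [smul_eq_mul, ← ENNReal.ofReal_ofNat, ← ENNReal.ofReal_mul (by norm_num)]
          congr 1
          ring
        change _ = C * 2 ^ d * (ENNReal.ofReal ((1/2:ℝ) • r) ^ d * Ff N ν Γ (((1/2:ℝ) • r) • e))
        rw [smul_assoc]
        conv_lhs => rw [e1, mul_pow]
        ring
    _ = C * 2 ^ (d + 1) * Mf N ν Γ e d := by
        rw [lint_smul _ (g := fun s : ℝ => (C * 2 ^ d) * (ENNReal.ofReal s ^ d * Ff N ν Γ (s • e)))
          (by fun_prop) (by norm_num), lintegral_const_mul _ (by fun_prop)]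
        rw [Module.finrank_self, show ENNReal.ofReal ((1/2:ℝ)⁻¹ ^ 1) = 2 by norm_num, pow_succ]
        unfold Mf
        ring

/-- tilted Gaussian tail for the residual -/
lemma tilt_a {N : ℝ} (hN : 0 < N) {ν : Measure EE} [IsProbabilityMeasure ν] (hν : PL1 ν)
    (hs : ν.map (fun y => -y) = ν) (Γ : Fin k → EE) (e : Fin k → ℝ) (d : ℕ) :
    ∫⁻ z, ENNReal.ofReal (Real.exp (Qf Γ (z.1 • e) z.2 / (16 * N))) ∂(tm N ν Γ e d) ≤
      4 ^ k * 2 ^ (d + 1) * Mf N ν Γ e d := by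
  refine tilt_int hN hν Γ e d (by fun_prop) (4 ^ k) fun r => ?_
  have h := tilt_gen hN hν hs Γ (r • e)
    (fun y => Kf N Γ (r • e) y * ENNReal.ofReal (Real.exp (Qf Γ (r • e) y / (16 * N))) ^ 2)
    (fun z y => ENNReal.ofReal (Real.exp (-(2 * Qf Γ z y) / N)))
    (fun z y => Kf N Γ z y) (by fun_prop) (by unfold Function.uncurry; fun_prop)
    (by unfold Function.uncurry; fun_prop) ?_ ?_
  · have e1 : ∫⁻ z, ∫⁻ y, Kf N Γ z y ∂ν = kap k N := by
      rw [lintegral_lintegral_swap (Measurable.aemeasurable (by unfold Function.uncurry; fun_prop))]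
      simp [lint_Kf]
    have e2 : 2 ^ k * ∫⁻ z, ∫⁻ y, ENNReal.ofReal (Real.exp (-(2 * Qf Γ z y) / N)) ∂ν = kap k N := by
      rw [lintegral_lintegral_swap (Measurable.aemeasurable (by unfold Function.uncurry; fun_prop))]
      rw [← lintegral_const_mul _ (by
        refine Measurable.lintegral_prod_right' (f := fun z : EE × (Fin k → ℝ) =>
          ENNReal.ofReal (Real.exp (-(2 * Qf Γ z.2 z.1) / N))) ?_
        fun_prop)]
      have : ∀ y, 2 ^ k * ∫⁻ z, ENNReal.ofReal (Real.exp (-(2 * Qf Γ z y) / N)) = kap k N := by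
        intro y
        rw [← lint_half (by fun_prop) (fun i => ⟪Γ i, y⟫)]
        unfold kap
        rw [← lintegral_add_left_eq_self (μ := (volume : Measure (Fin k → ℝ)))
          (fun z => ENNReal.ofReal (Real.exp (-(∑ i, z i ^ 2) / (2 * N)))) (-(fun i => ⟪Γ i, y⟫))]
        refine lintegral_congr fun z => ?_
        congr 2
        unfold Qf
        have : ∀ i, (((1/2:ℝ) • ((fun i => ⟪Γ i, y⟫) + z)) i - ⟪Γ i, y⟫) ^ 2 =
            1 / 4 * ((-(fun i => ⟪Γ i, y⟫) + z) i) ^ 2 := by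
          intro i
          simp
          ring
        simp_rw [this]
        rw [← Finset.mul_sum]
        field_simp
        ring
      simp [this]
    rw [e1] at h
    obtain ⟨h0, ht⟩ := kap_ne (k := k) N hN
    have h3 : (∫⁻ y, Kf N Γ (r • e) y * ENNReal.ofReal (Real.exp (Qf Γ (r • e) y / (16 * N))) ^ 2 ∂ν)
        * kap k N ^ 2 ≤ ((4 ^ k) ^ 2 * Ff N ν Γ 0) * kap k N ^ 2 := by
      conv_lhs => rw [← e2]
      rw [mul_pow, mul_left_comm]
      refine (mul_le_mul_right h _).trans (le_of_eq ?_)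
      rw [show (4:ℝ≥0∞) = 2 * 2 by norm_num, mul_pow 2 2]
      ring
    exact (ENNReal.mul_le_mul_iff_left (pow_ne_zero 2 h0) (ENNReal.pow_ne_top ht)).1 h3
  · intro z y
    unfold Kf
    refine ENNReal.ofReal_le_ofReal (Real.exp_le_exp.2 ?_)
    have := Qf_nonneg Γ z y
    rw [div_le_div_iff₀ hN (by positivity)]
    nlinarith [mul_nonneg this hN.le]
  · intro y z y'
    unfold Kf
    rw [← ENNReal.ofReal_pow (by positivity), ← ENNReal.ofReal_pow (by positivity),
      ← ENNReal.ofReal_mul (by positivity), ← ENNReal.ofReal_mul (by positivity), ← Real.exp_nat_mul,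
      ← Real.exp_nat_mul, ← Real.exp_add, ← Real.exp_add]
    refine ENNReal.ofReal_le_ofReal (Real.exp_le_exp.2 ?_)
    have := Qf_mid Γ (r • e) z y y' (1/2) (by norm_num)
    have h1 := Qf_nonneg Γ z y'
    have h2 : (Qf Γ ((1/2:ℝ) • (r • e + z)) ((1/2:ℝ) • (y + y')) - (3/8 * Qf Γ (r • e) y + 2 * Qf Γ z y')) / N ≤ 0 := by
      refine div_nonpos_of_nonpos_of_nonneg ?_ hN.le
      linarith
    refine le_of_sub_nonpos (le_trans (le_of_eq ?_) h2)
    push_cast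
    field_simp
    ring
end

section
variable {k n : ℕ}
local notation "EE" => EuclideanSpace ℝ (Fin n)

lemma half_sym {ν : Measure EE} [IsProbabilityMeasure ν] (hs : ν.map (fun y => -y) = ν) (v : EE) :
    1 ≤ 2 * ν {y | 0 ≤ ⟪v, y⟫} := by
  have hm : MeasurableSet {y : EE | 0 ≤ ⟪v, y⟫} := measurableSet_le (by fun_prop) (by fun_prop)
  have h1 : ν {y | ⟪v, y⟫ ≤ 0} = ν {y | 0 ≤ ⟪v, y⟫} := by
    conv_rhs => rw [← hs]
    rw [Measure.map_apply (by fun_prop) hm]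
    congr 1
    ext y
    simp
  have h2 : (Set.univ : Set EE) ⊆ {y | 0 ≤ ⟪v, y⟫} ∪ {y | ⟪v, y⟫ ≤ 0} := by
    intro y _
    exact le_total (0:ℝ) ⟪v, y⟫
  have h3 := (measure_mono (μ := ν) h2).trans (measure_union_le _ _)
  rw [measure_univ, h1, ← two_mul] at h3
  exact h3

lemma tilt_b {N : ℝ} (hN : 0 < N) {ν : Measure EE} [IsProbabilityMeasure ν] (hν : PL1 ν)
    (hs : ν.map (fun y => -y) = ν) (Γ : Fin k → EE) (e : Fin k → ℝ) (d : ℕ) (v : EE) (m : ℕ)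
    (hm : m ≠ 0) :
    ∫⁻ z, ENNReal.ofReal ⟪v, z.2⟫ ^ m ∂(tm N ν Γ e d) ≤
      2 ^ (k + m + 1) * (∫⁻ y, ENNReal.ofReal ⟪v, y⟫ ^ m ∂ν) * 2 ^ (d + 1) * Mf N ν Γ e d := by
  refine tilt_int hN hν Γ e d (by fun_prop) _ fun r => ?_
  have hms : MeasurableSet {y : EE | 0 ≤ ⟪v, y⟫} := measurableSet_le (by fun_prop) (by fun_prop)
  have h := tilt_gen hN hν hs Γ (r • e)
    (fun y => Kf N Γ (r • e) y * (ENNReal.ofReal ⟪v, y⟫ ^ m) ^ 2)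
    (fun z y => Kf N Γ z y * Set.indicator {y | 0 ≤ ⟪v, y⟫} (fun _ => 1) y)
    (fun z y => Kf N Γ z y * (2 * ENNReal.ofReal ⟪v, y⟫) ^ m) (by fun_prop) ?_
    (by unfold Function.uncurry; fun_prop) ?_ ?_
  · have gen : ∀ w : EE → ℝ≥0∞, Measurable w →
        ∫⁻ z, ∫⁻ y, Kf N Γ z y * w y ∂ν = kap k N * ∫⁻ y, w y ∂ν := by
      intro w hw
      rw [lintegral_lintegral_swap (Measurable.aemeasurable (by unfold Function.uncurry; fun_prop))]
      rw [← lintegral_const_mul _ hw]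
      refine lintegral_congr fun y => ?_
      rw [lintegral_mul_const _ (by fun_prop), lint_Kf]
    rw [gen _ (measurable_const.indicator hms), gen _ (by fun_prop), lintegral_indicator_const hms,
      one_mul] at h
    simp_rw [mul_pow (2:ℝ≥0∞)] at h
    rw [lintegral_const_mul _ (by fun_prop)] at h
    obtain ⟨h0, ht⟩ := kap_ne (k := k) N hN
    set I := ∫⁻ y, Kf N Γ (r • e) y * (ENNReal.ofReal ⟪v, y⟫ ^ m) ^ 2 ∂ν with hI
    set J := ∫⁻ y, ENNReal.ofReal ⟪v, y⟫ ^ m ∂ν with hJ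
    have h3 : I * kap k N ^ 2 ≤ ((2 ^ (k + m + 1) * J) ^ 2 * Ff N ν Γ 0) * kap k N ^ 2 := by
      calc I * kap k N ^ 2 ≤ I * kap k N ^ 2 * (2 * ν {y | 0 ≤ ⟪v, y⟫}) ^ 2 := by
            exact le_mul_of_one_le_right' (one_le_pow₀ (half_sym hs v))
        _ = 4 * (I * (kap k N * ν {y | 0 ≤ ⟪v, y⟫}) ^ 2) := by ring
        _ ≤ 4 * (Ff N ν Γ 0 * (2 ^ k * (kap k N * (2 ^ m * J))) ^ 2) :=
            mul_le_mul_right h _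
        _ = _ := by
            rw [pow_succ, pow_add]
            ring
    exact (ENNReal.mul_le_mul_iff_left (pow_ne_zero 2 h0) (ENNReal.pow_ne_top ht)).1 h3
  · unfold Function.uncurry
    have : Measurable (Set.indicator {y : EE | 0 ≤ ⟪v, y⟫} (fun _ => (1:ℝ≥0∞))) :=
      measurable_const.indicator hms
    fun_prop
  · intro z y
    refine mul_le_of_le_one_right' ?_
    by_cases h : y ∈ {y : EE | 0 ≤ ⟪v, y⟫}
    · simp [Set.indicator_of_mem h]
    · simp [Set.indicator_of_notMem h]
  · intro y z y'
    by_cases h : y' ∈ {y : EE | 0 ≤ ⟪v, y⟫}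
    swap
    · simp [Set.indicator_of_notMem h]
    simp only [Set.indicator_of_mem h, mul_one]
    rw [mul_pow, mul_right_comm]
    refine mul_le_mul' (Kf_mid hN Γ _ _ _ _) ?_
    refine pow_le_pow_left' (pow_le_pow_left' ?_ m) 2
    rw [show ∀ a : ℝ, 2 * ENNReal.ofReal a = ENNReal.ofReal (2 * a) from fun a => by
      rw [ENNReal.ofReal_mul (by norm_num), ENNReal.ofReal_ofNat]]
    refine ENNReal.ofReal_le_ofReal ?_
    have h' : 0 ≤ ⟪v, y'⟫ := h
    rw [inner_smul_right, inner_add_right]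
    linarith

lemma abs_pow_split (a : ℝ) {m : ℕ} (hm : m ≠ 0) :
    ENNReal.ofReal |a| ^ m = ENNReal.ofReal a ^ m + ENNReal.ofReal (-a) ^ m := by
  rcases le_total 0 a with h | h
  · rw [abs_of_nonneg h, ENNReal.ofReal_of_nonpos (neg_nonpos.2 h), zero_pow hm, add_zero]
  · rw [abs_of_nonpos h, ENNReal.ofReal_of_nonpos h, zero_pow hm, zero_add]

lemma tilt_abs {N : ℝ} (hN : 0 < N) {ν : Measure EE} [IsProbabilityMeasure ν] (hν : PL1 ν)
    (hs : ν.map (fun y => -y) = ν) (Γ : Fin k → EE) (e : Fin k → ℝ) (d : ℕ) (v : EE)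
    (hk : k ≠ 0) (hd : d + 1 ≤ 3 * k) :
    ∫⁻ z, ENNReal.ofReal |⟪v, z.2⟫| ^ k ∂(tm N ν Γ e d) ≤
      64 ^ k * (∫⁻ y, ENNReal.ofReal |⟪v, y⟫| ^ k ∂ν) * Mf N ν Γ e d := by
  have h1 := tilt_b hN hν hs Γ e d v k hk
  have h2 := tilt_b hN hν hs Γ e d (-v) k hk
  simp only [inner_neg_left] at h2
  simp_rw [abs_pow_split _ hk]
  rw [lintegral_add_left (by fun_prop), lintegral_add_left (by fun_prop)]
  refine (add_le_add h1 h2).trans ?_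
  have : (2:ℝ≥0∞) ^ (k + k + 1) * 2 ^ (d + 1) ≤ 64 ^ k := by
    rw [← pow_add, show (64:ℝ≥0∞) = 2 ^ 6 by norm_num, ← pow_mul]
    exact pow_le_pow_right₀ (by norm_num) (by omega)
  refine le_trans (le_of_eq ?_) (mul_le_mul_left (mul_le_mul_left this _) _)
  ring

lemma tilt_second {N : ℝ} (hN : 0 < N) {ν : Measure EE} [IsProbabilityMeasure ν] (hν : PL1 ν)
    (hs : ν.map (fun y => -y) = ν) (Γ : Fin k → EE) (e : Fin k → ℝ) (d : ℕ)
    (hk : 2 ≤ k) (hd : d + 1 ≤ 3 * k) {L : ℝ} (hL0 : 0 < L)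
    (hL : ∀ v : EE, ∫⁻ y, ENNReal.ofReal |⟪v, y⟫| ^ k ∂ν ≤ ENNReal.ofReal (L * ‖v‖) ^ k) (v : EE) :
    ∫⁻ z, ENNReal.ofReal (⟪v, z.2⟫ ^ 2) ∂(tm N ν Γ e d) ≤
      ENNReal.ofReal (8192 * L ^ 2 * ‖v‖ ^ 2) * Mf N ν Γ e d := by
  by_cases hv : v = 0
  · simp [hv]
  have hv0 : 0 < ‖v‖ := norm_pos_iff.2 hv
  set C := 64 * (L * ‖v‖) with hC
  have hC0 : 0 < C := by positivity
  have h1 := tilt_abs hN hν hs Γ e d v (by omega) hd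
  have h2 : ∫⁻ z, ENNReal.ofReal |⟪v, z.2⟫| ^ k ∂(tm N ν Γ e d) ≤
      ENNReal.ofReal C ^ k * Mf N ν Γ e d := by
    refine h1.trans (mul_le_mul_left ((mul_le_mul_right (hL v) _).trans (le_of_eq ?_)) _)
    have : ENNReal.ofReal C = 64 * ENNReal.ofReal (L * ‖v‖) := by
      rw [hC, ENNReal.ofReal_mul (by norm_num : (0:ℝ) ≤ 64), ENNReal.ofReal_ofNat]
    rw [this, mul_pow]
  have hpt : ∀ u : ℝ, ENNReal.ofReal (u ^ 2) ≤
      ENNReal.ofReal (C ^ 2) + ENNReal.ofReal (C ^ 2 * (C ^ k)⁻¹) * ENNReal.ofReal |u| ^ k := by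
    intro u
    rw [← ENNReal.ofReal_pow (abs_nonneg _), ← ENNReal.ofReal_mul (by positivity),
      ← ENNReal.ofReal_add (by positivity) (by positivity)]
    refine ENNReal.ofReal_le_ofReal ?_
    have e1 : C ^ 2 + C ^ 2 * (C ^ k)⁻¹ * |u| ^ k = C ^ 2 * (1 + (|u| / C) ^ k) := by
      rw [div_pow]; ring
    have e2 : u ^ 2 = C ^ 2 * (|u| / C) ^ 2 := by
      rw [div_pow, sq_abs]; field_simp
    rw [e1, e2]
    refine mul_le_mul_of_nonneg_left ?_ (by positivity)
    have hw : 0 ≤ |u| / C := by positivity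
    generalize |u| / C = w at hw
    rcases le_total w 1 with h | h
    · have := pow_le_one₀ (n := 2) hw h
      have := pow_nonneg hw k
      linarith
    · have := pow_le_pow_right₀ h hk
      linarith
  calc _ ≤ ∫⁻ z, (ENNReal.ofReal (C ^ 2) + ENNReal.ofReal (C ^ 2 * (C ^ k)⁻¹) *
        ENNReal.ofReal |⟪v, z.2⟫| ^ k) ∂(tm N ν Γ e d) := lintegral_mono fun z => hpt _
    _ = ENNReal.ofReal (C ^ 2) * Mf N ν Γ e d + ENNReal.ofReal (C ^ 2 * (C ^ k)⁻¹) *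
        ∫⁻ z, ENNReal.ofReal |⟪v, z.2⟫| ^ k ∂(tm N ν Γ e d) := by
      rw [lintegral_add_left (by fun_prop), lintegral_const, tm_univ,
        lintegral_const_mul _ (by fun_prop)]
    _ ≤ ENNReal.ofReal (C ^ 2) * Mf N ν Γ e d + ENNReal.ofReal (C ^ 2 * (C ^ k)⁻¹) *
        (ENNReal.ofReal C ^ k * Mf N ν Γ e d) := by gcongr
    _ = _ := by
      rw [← ENNReal.ofReal_pow hC0.le, ← mul_assoc, ← ENNReal.ofReal_mul (by positivity), ← add_mul,
        ← ENNReal.ofReal_add (by positivity) (by positivity)]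
      congr 2
      rw [mul_assoc, inv_mul_cancel₀ (by positivity), hC]
      ring

lemma tilt_resid {N : ℝ} (hN : 0 < N) {ν : Measure EE} [IsProbabilityMeasure ν] (hν : PL1 ν)
    (hs : ν.map (fun y => -y) = ν) (Γ : Fin k → EE) (e : Fin k → ℝ) (d : ℕ)
    (hk : 2 ≤ k) (hd : d + 1 ≤ 3 * k) :
    ∫⁻ z, ENNReal.ofReal (Qf Γ (z.1 • e) z.2) ∂(tm N ν Γ e d) ≤
      ENNReal.ofReal (80 * N * k) * Mf N ν Γ e d := by
  have h1 := tilt_a hN hν hs Γ e d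
  have h2 : (4:ℝ≥0∞) ^ k * 2 ^ (d + 1) ≤ ENNReal.ofReal (Real.exp (5 * k)) := by
    have : (4:ℝ≥0∞) ^ k * 2 ^ (d + 1) ≤ 2 ^ (5 * k) := by
      rw [show (4:ℝ≥0∞) = 2 ^ 2 by norm_num, ← pow_mul, ← pow_add]
      exact pow_le_pow_right₀ (by norm_num) (by omega)
    refine this.trans ?_
    rw [← ENNReal.ofReal_ofNat, ← ENNReal.ofReal_pow (by norm_num)]
    refine ENNReal.ofReal_le_ofReal ?_
    rw [show (5 * (k:ℝ)) = ((5 * k : ℕ) : ℝ) * 1 by push_cast; ring, Real.exp_nat_mul]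
    refine pow_le_pow_left₀ (by norm_num) ?_ _
    have := Real.add_one_le_exp (1:ℝ)
    linarith
  have hk' : (2:ℝ) ≤ k := by exact_mod_cast hk
  have hpt : ∀ u : ℝ, ENNReal.ofReal u ≤ ENNReal.ofReal (16 * N * Real.exp (-(5 * k))) *
      ENNReal.ofReal (Real.exp (u / (16 * N))) + ENNReal.ofReal (16 * N * (5 * k - 1)) := by
    intro u
    have hp : 0 ≤ 16 * N * (5 * (k:ℝ) - 1) := mul_nonneg (by positivity) (by linarith)
    rw [← ENNReal.ofReal_mul (by positivity), ← ENNReal.ofReal_add (by positivity) hp]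
    refine ENNReal.ofReal_le_ofReal ?_
    have h := Real.add_one_le_exp (-(5 * (k:ℝ)) + u / (16 * N))
    rw [Real.exp_add] at h
    have h' := mul_le_mul_of_nonneg_left h (by positivity : 0 ≤ 16 * N)
    have e1 : 16 * N * (-(5 * (k:ℝ)) + u / (16 * N) + 1) = u - 16 * N * (5 * k - 1) := by
      field_simp
      ring
    rw [e1] at h'
    linarith
  calc _ ≤ ∫⁻ z, (ENNReal.ofReal (16 * N * Real.exp (-(5 * k))) *
      ENNReal.ofReal (Real.exp (Qf Γ (z.1 • e) z.2 / (16 * N))) + ENNReal.ofReal (16 * N * (5 * k - 1)))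
        ∂(tm N ν Γ e d) := lintegral_mono fun z => hpt _
    _ = ENNReal.ofReal (16 * N * Real.exp (-(5 * k))) *
      (∫⁻ z, ENNReal.ofReal (Real.exp (Qf Γ (z.1 • e) z.2 / (16 * N))) ∂(tm N ν Γ e d)) +
        ENNReal.ofReal (16 * N * (5 * k - 1)) * Mf N ν Γ e d := by
      rw [lintegral_add_left (by fun_prop), lintegral_const, tm_univ,
        lintegral_const_mul _ (by fun_prop)]
    _ ≤ ENNReal.ofReal (16 * N * Real.exp (-(5 * k))) *
      (ENNReal.ofReal (Real.exp (5 * k)) * Mf N ν Γ e d) +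
        ENNReal.ofReal (16 * N * (5 * k - 1)) * Mf N ν Γ e d := by
      have := h1.trans (mul_le_mul_left h2 _)
      gcongr
    _ = _ := by
      rw [← mul_assoc, ← ENNReal.ofReal_mul (by positivity), ← add_mul,
        ← ENNReal.ofReal_add (by positivity) (mul_nonneg (by positivity) (by linarith))]
      congr 2
      rw [mul_assoc (16 * N), ← Real.exp_add]
      simp
      ring
end

lemma gauss_mom_fin (N : ℝ) (hN : 0 < N) (d : ℕ) :
    ∫⁻ r : ℝ, ENNReal.ofReal |r| ^ d * ENNReal.ofReal (Real.exp (-r ^ 2 / (2 * N))) ≠ ∞ := by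
  have h := integrable_rpow_mul_exp_neg_mul_sq (b := 1 / (2 * N)) (by positivity) (s := d)
    (by have : (0:ℝ) ≤ d := Nat.cast_nonneg d
        linarith)
  have h2 := h.norm.lintegral_lt_top.ne
  convert h2 using 3 with r
  rw [← ENNReal.ofReal_pow (abs_nonneg _), ← ENNReal.ofReal_mul (by positivity)]
  congr 1
  rw [norm_mul, Real.rpow_natCast, norm_pow, Real.norm_eq_abs, Real.norm_eq_abs, Real.abs_exp]
  congr 2
  ring

lemma add_pow_le_two (a b : ℝ≥0∞) (d : ℕ) : (a + b) ^ d ≤ 2 ^ d * (a ^ d + b ^ d) := by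
  rcases le_total a b with h | h
  · calc (a + b) ^ d ≤ (2 * b) ^ d := by
          gcongr; rw [two_mul]; gcongr
      _ = 2 ^ d * b ^ d := mul_pow _ _ _
      _ ≤ _ := by gcongr; exact le_add_self
  · calc (a + b) ^ d ≤ (2 * a) ^ d := by
          gcongr; rw [two_mul]; gcongr
      _ = 2 ^ d * a ^ d := mul_pow _ _ _
      _ ≤ _ := by gcongr; exact le_self_add

section
variable {k n : ℕ}
local notation "EE" => EuclideanSpace ℝ (Fin n)

lemma Mf_fin {N : ℝ} (hN : 0 < N) {ν : Measure EE} [IsProbabilityMeasure ν]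
    (hfin : ∀ (v : EE) (m : ℕ), ∫⁻ y, ENNReal.ofReal |⟪v, y⟫| ^ m ∂ν ≠ ∞)
    (Γ : Fin k → EE) (e : Fin k → ℝ) (i0 : Fin k) (he : e i0 = 1) (d : ℕ) :
    Mf N ν Γ e d ≠ ∞ := by
  set G := fun d : ℕ => ∫⁻ r : ℝ, ENNReal.ofReal |r| ^ d *
    ENNReal.ofReal (Real.exp (-r ^ 2 / (2 * N))) with hG
  have hGf : ∀ d, G d ≠ ∞ := fun d => gauss_mom_fin N hN d
  have h1 : Mf N ν Γ e d ≤ ∫⁻ y, 2 ^ d * (G d + ENNReal.ofReal |⟪Γ i0, y⟫| ^ d * G 0) ∂ν := by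
    rw [← tm_univ, ← lintegral_one]
    unfold tm
    rw [lintegral_withDensity_eq_lintegral_mul _ (by fun_prop) (by fun_prop),
      lintegral_prod_symm _ (Measurable.aemeasurable (by fun_prop))]
    refine lintegral_mono fun y => ?_
    simp only [Pi.mul_apply, Pi.one_apply, mul_one]
    set a := ⟪Γ i0, y⟫ with ha
    have hle : ∀ r : ℝ, ENNReal.ofReal r ^ d * Kf N Γ (r • e) y ≤
        2 ^ d * (ENNReal.ofReal |r - a| ^ d * ENNReal.ofReal (Real.exp (-(r - a) ^ 2 / (2 * N))) +
        ENNReal.ofReal |a| ^ d * (ENNReal.ofReal |r - a| ^ 0 *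
          ENNReal.ofReal (Real.exp (-(r - a) ^ 2 / (2 * N))))) := by
      intro r
      have h2 : ENNReal.ofReal r ≤ ENNReal.ofReal |r - a| + ENNReal.ofReal |a| := by
        rw [← ENNReal.ofReal_add (abs_nonneg _) (abs_nonneg _)]
        refine ENNReal.ofReal_le_ofReal ?_
        linarith [le_abs_self (r - a), le_abs_self a]
      have h3 : Kf N Γ (r • e) y ≤ ENNReal.ofReal (Real.exp (-(r - a) ^ 2 / (2 * N))) := by
        unfold Kf
        refine ENNReal.ofReal_le_ofReal (Real.exp_le_exp.2 ?_)
        rw [div_le_div_iff_of_pos_right (by positivity), neg_le_neg_iff]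
        unfold Qf
        refine le_trans (le_of_eq ?_) (Finset.single_le_sum
          (f := fun i => ((r • e) i - ⟪Γ i, y⟫) ^ 2) (fun i _ => sq_nonneg _) (Finset.mem_univ i0))
        simp [he, ha]
      refine (mul_le_mul' ((pow_le_pow_left' h2 d).trans (add_pow_le_two _ _ d)) h3).trans
        (le_of_eq ?_)
      ring
    refine (lintegral_mono hle).trans (le_of_eq ?_)
    rw [lintegral_const_mul _ (by fun_prop), lintegral_add_left (by fun_prop),
      lintegral_const_mul _ (by fun_prop),
      lintegral_sub_right_eq_self (μ := (volume : Measure ℝ)) (fun r => ENNReal.ofReal |r| ^ d *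
        ENNReal.ofReal (Real.exp (-r ^ 2 / (2 * N)))) a,
      lintegral_sub_right_eq_self (μ := (volume : Measure ℝ)) (fun r => ENNReal.ofReal |r| ^ 0 *
        ENNReal.ofReal (Real.exp (-r ^ 2 / (2 * N)))) a]
  refine ne_top_of_le_ne_top ?_ h1
  rw [lintegral_const_mul _ (by fun_prop), lintegral_add_left (by fun_prop),
    lintegral_mul_const _ (by fun_prop)]
  simp only [lintegral_const, measure_univ, mul_one]
  exact ENNReal.mul_ne_top (by simp) (ENNReal.add_ne_top.2 ⟨hGf d, ENNReal.mul_ne_top (hfin _ _) (hGf 0)⟩)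

lemma Mf_lip {N : ℝ} (hN : 0 < N) {ν : Measure EE} [IsProbabilityMeasure ν] (hν : PL1 ν)
    (hs : ν.map (fun y => -y) = ν)
    (hfin : ∀ (v : EE) (m : ℕ), ∫⁻ y, ENNReal.ofReal |⟪v, y⟫| ^ m ∂ν ≠ ∞)
    (Γ H : Fin k → EE) (e : Fin k → ℝ) (i0 : Fin k) (he : e i0 = 1) (d : ℕ)
    (hk : 2 ≤ k) (hd : d + 1 ≤ 3 * k) {L : ℝ} (hL0 : 0 < L)
    (hL : ∀ v : EE, ∫⁻ y, ENNReal.ofReal |⟪v, y⟫| ^ k ∂ν ≤ ENNReal.ofReal (L * ‖v‖) ^ k)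
    (hLN : 16384 * L ^ 2 ≤ N) :
    ENNReal.ofReal (Real.exp (-(80 * (8192 * L ^ 2) * k / N + (∑ i, ‖H i‖ ^ 2) / 2))) * Mf N ν Γ e d
      ≤ Mf N ν (Γ + H) e d := by
  set ε := 16384 * L ^ 2 / N with hε
  have hε0 : 0 < ε := by positivity
  have hε1 : ε ≤ 1 := by rw [hε, div_le_one hN]; exact hLN
  set z : ℝ × EE → ℝ := fun z => ε / (2 * N) * Qf Γ (z.1 • e) z.2 +
    1 / (ε * N) * ∑ i, ⟪H i, z.2⟫ ^ 2 with hz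
  set z0 := 80 * (8192 * L ^ 2) * k / N + (∑ i, ‖H i‖ ^ 2) / 2 with hz0
  have hz0' : 0 ≤ z0 := by positivity
  have hzm : Measurable z := by rw [hz]; fun_prop
  have hM := Mf_fin hN hfin Γ e i0 he d
  set M := Mf N ν Γ e d with hMd
  -- the integral of z
  have hzi : ∫⁻ x, ENNReal.ofReal (z x) ∂(tm N ν Γ e d) ≤ ENNReal.ofReal z0 * M := by
    have e1 : ∀ x, ENNReal.ofReal (z x) = ENNReal.ofReal (ε / (2 * N)) *
        ENNReal.ofReal (Qf Γ (x.1 • e) x.2) + ENNReal.ofReal (1 / (ε * N)) *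
        ∑ i, ENNReal.ofReal (⟪H i, x.2⟫ ^ 2) := by
      intro x
      rw [← ENNReal.ofReal_sum_of_nonneg (fun _ _ => sq_nonneg _), ← ENNReal.ofReal_mul (by positivity),
        ← ENNReal.ofReal_mul (by positivity), ← ENNReal.ofReal_add]
      · exact mul_nonneg (by positivity) (Qf_nonneg _ _ _)
      · exact mul_nonneg (by positivity) (Finset.sum_nonneg fun _ _ => sq_nonneg _)
    simp_rw [e1]
    rw [lintegral_add_left (by fun_prop), lintegral_const_mul _ (by fun_prop),
      lintegral_const_mul _ (by fun_prop), lintegral_finsetSum _ (fun i _ => by fun_prop)]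
    calc _ ≤ ENNReal.ofReal (ε / (2 * N)) * (ENNReal.ofReal (80 * N * k) * M) +
          ENNReal.ofReal (1 / (ε * N)) * ∑ i, ENNReal.ofReal (8192 * L ^ 2 * ‖H i‖ ^ 2) * M := by
          refine add_le_add (mul_le_mul_right (tilt_resid hN hν hs Γ e d hk hd) _)
            (mul_le_mul_right (Finset.sum_le_sum fun i _ => ?_) _)
          exact tilt_second hN hν hs Γ e d hk hd hL0 hL (H i)
      _ = ENNReal.ofReal z0 * M := by
          rw [← Finset.sum_mul, ← ENNReal.ofReal_sum_of_nonneg (fun _ _ => by positivity),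
            ← mul_assoc, ← mul_assoc, ← ENNReal.ofReal_mul (by positivity),
            ← ENNReal.ofReal_mul (by positivity), ← add_mul, ← ENNReal.ofReal_add (by positivity)
            (mul_nonneg (by positivity) (Finset.sum_nonneg fun _ _ => by positivity)), ← Finset.mul_sum]
          congr 2
          rw [hz0, hε]
          field_simp
          ring
  -- lower bound
  have hlow : ∫⁻ x, ENNReal.ofReal (Real.exp (-z x)) ∂(tm N ν Γ e d) ≤ Mf N ν (Γ + H) e d := by
    rw [tm_lint N ν Γ e d (by fun_prop)]
    unfold Mf Ff
    refine lintegral_mono fun r => mul_le_mul_right (lintegral_mono fun y => ?_) _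
    unfold Kf
    rw [← ENNReal.ofReal_mul (by positivity), ← Real.exp_add]
    refine ENNReal.ofReal_le_ofReal (Real.exp_le_exp.2 ?_)
    have hq : Qf (Γ + H) (r • e) y ≤ (1 + ε) * Qf Γ (r • e) y + (2 / ε) * ∑ i, ⟪H i, y⟫ ^ 2 := by
      unfold Qf
      rw [Finset.mul_sum, Finset.mul_sum, ← Finset.sum_add_distrib]
      refine Finset.sum_le_sum fun i _ => ?_
      rw [Pi.add_apply, inner_add_left]
      generalize (r • e) i = a
      generalize ⟪Γ i, y⟫ = b
      generalize ⟪H i, y⟫ = c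
      have h0 : 0 ≤ (ε * (a - b) + c) ^ 2 / ε := by positivity
      have h1 : (1 + ε) * (a - b) ^ 2 + (1 + 1 / ε) * c ^ 2 - (a - (b + c)) ^ 2 =
        (ε * (a - b) + c) ^ 2 / ε := by field_simp; ring
      have h2 : 1 + 1 / ε ≤ 2 / ε := by
        rw [show (2:ℝ) / ε = 1 / ε + 1 / ε by ring]
        have : 1 ≤ 1 / ε := by rw [le_div_iff₀ hε0]; linarith
        linarith
      have h3 := mul_le_mul_of_nonneg_right h2 (sq_nonneg c)
      linarith
    have hq2 := div_le_div_of_nonneg_right hq (by positivity : 0 ≤ 2 * N)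
    rw [neg_div, neg_div, ← neg_add, neg_le_neg_iff]
    refine hq2.trans (le_of_eq ?_)
    simp only [hz]
    field_simp
    ring
  refine le_trans ?_ hlow
  have hpt : ∀ x, ENNReal.ofReal (Real.exp (-z0)) + ENNReal.ofReal (Real.exp (-z0)) * ENNReal.ofReal z0 ≤
      ENNReal.ofReal (Real.exp (-z x)) + ENNReal.ofReal (Real.exp (-z0)) * ENNReal.ofReal (z x) := by
    intro x
    have hzx : 0 ≤ z x := by
      simp only [hz]
      exact add_nonneg (mul_nonneg (by positivity) (Qf_nonneg _ _ _))
        (mul_nonneg (by positivity) (Finset.sum_nonneg fun _ _ => sq_nonneg _))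
    rw [← ENNReal.ofReal_mul (by positivity), ← ENNReal.ofReal_mul (by positivity),
      ← ENNReal.ofReal_add (by positivity) (by positivity),
      ← ENNReal.ofReal_add (by positivity) (by positivity)]
    refine ENNReal.ofReal_le_ofReal ?_
    have h := Real.add_one_le_exp (z0 - z x)
    have h2 := mul_le_mul_of_nonneg_left h (Real.exp_pos (-z0)).le
    rw [← Real.exp_add, show -z0 + (z0 - z x) = -z x by ring] at h2
    linarith
  have hI := lintegral_mono (μ := tm N ν Γ e d) hpt
  rw [lintegral_const, tm_univ, lintegral_add_left (by fun_prop), lintegral_const_mul _ (by fun_prop)] at hI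
  have hI2 := hI.trans (add_le_add_right (mul_le_mul_right hzi _) _)
  rw [add_mul, ← mul_assoc] at hI2
  refine ENNReal.le_of_add_le_add_right ?_ hI2
  exact ENNReal.mul_ne_top (ENNReal.mul_ne_top ENNReal.ofReal_ne_top ENNReal.ofReal_ne_top) hM

end

/-- Weighted AM-GM. -/
lemma wamgm (p m : ℕ) (hpm : p < m) (r s : ℝ) (hr : 0 < r) (hs : 0 < s) :
    r ^ (m + p) * s ^ (m - p) ≤ Real.exp (2 * (p:ℝ) ^ 2 / m) * (((1/2:ℝ) * (r + s)) ^ m) ^ 2 := by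
  set R := (1/2:ℝ) * (r + s) with hR
  have hR0 : 0 < R := by positivity
  have hm : (0:ℝ) < m := by
    have : 0 < m := by omega
    exact_mod_cast this
  set x : ℝ := p / m with hx
  have hx0 : 0 ≤ x := by positivity
  have hx1 : x < 1 := by
    rw [hx, div_lt_one hm]; exact_mod_cast hpm
  set u : ℝ := r / R - 1 with hu
  have hru : r = R * (1 + u) := by rw [hu]; field_simp; ring
  have hsu : s = R * (1 - u) := by
    have : s = 2 * R - r := by rw [hR]; ring
    rw [this, hru]; ring
  have hu1 : 0 < 1 + u := by
    have : 0 < R * (1 + u) := hru ▸ hr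
    exact (mul_pos_iff_of_pos_left hR0).1 this
  have hu2 : 0 < 1 - u := by
    have : 0 < R * (1 - u) := hsu ▸ hs
    exact (mul_pos_iff_of_pos_left hR0).1 this
  have b1 : 1 + u ≤ Real.exp (x + (u - x) / (1 + x)) := by
    rw [Real.exp_add]
    calc 1 + u = (x + 1) * ((u - x) / (1 + x) + 1) := by field_simp; ring
      _ ≤ _ := by
        refine mul_le_mul (Real.add_one_le_exp _) (Real.add_one_le_exp _) ?_ (Real.exp_pos _).le
        have : (u - x) / (1 + x) + 1 = (1 + u) / (1 + x) := by field_simp; ring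
        rw [this]; positivity
  have hx2 : 0 < 1 - x := by linarith
  have b2 : 1 - u ≤ Real.exp (-x + (x - u) / (1 - x)) := by
    rw [Real.exp_add]
    calc 1 - u = (-x + 1) * ((x - u) / (1 - x) + 1) := by field_simp; ring
      _ ≤ _ := by
        refine mul_le_mul (Real.add_one_le_exp _) (Real.add_one_le_exp _) ?_ (Real.exp_pos _).le
        have : (x - u) / (1 - x) + 1 = (1 - u) / (1 - x) := by field_simp; ring
        rw [this]; positivity
  have c1 := pow_le_pow_left₀ hu1.le b1 (m + p)
  have c2 := pow_le_pow_left₀ hu2.le b2 (m - p)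
  have c3 := mul_le_mul c1 c2 (by positivity) (by positivity)
  rw [← Real.exp_nat_mul, ← Real.exp_nat_mul, ← Real.exp_add] at c3
  have hexp : ((m + p : ℕ) : ℝ) * (x + (u - x) / (1 + x)) +
      ((m - p : ℕ) : ℝ) * (-x + (x - u) / (1 - x)) = 2 * (p:ℝ) ^ 2 / m := by
    rw [Nat.cast_sub hpm.le, Nat.cast_add]
    have hpx : (p:ℝ) = m * x := by rw [hx]; field_simp
    rw [hpx]
    field_simp
    ring
  rw [hexp] at c3
  have e1 : (R ^ m) ^ 2 = R ^ (m + p) * R ^ (m - p) := by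
    rw [← pow_add, ← pow_mul]; congr 1; omega
  rw [e1]
  have := mul_le_mul_of_nonneg_left c3 (by positivity : 0 ≤ R ^ (m + p) * R ^ (m - p))
  calc r ^ (m + p) * s ^ (m - p) = (R * (1 + u)) ^ (m + p) * (R * (1 - u)) ^ (m - p) := by
        rw [← hru, ← hsu]
    _ = R ^ (m + p) * R ^ (m - p) * ((1 + u) ^ (m + p) * (1 - u) ^ (m - p)) := by
        rw [mul_pow R, mul_pow R]; ring
    _ ≤ _ := this
    _ = _ := mul_comm _ _

section
variable {k n : ℕ}
local notation "EE" => EuclideanSpace ℝ (Fin n)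

@[fun_prop]
lemma measurable_Mf {N : ℝ} {ν : Measure EE} [SFinite ν] {e : Fin k → ℝ} {d : ℕ} {α : Type*}
    [MeasurableSpace α] {g : α → Fin k → EE} (hg : Measurable g) :
    Measurable (fun a => Mf N ν (g a) e d) := by
  unfold Mf
  refine Measurable.lintegral_prod_right'
    (f := fun z : α × ℝ => ENNReal.ofReal z.2 ^ d * Ff N ν (g z.1) (z.2 • e)) ?_
  fun_prop

lemma Mf_radial {N : ℝ} (hN : 0 < N) {ν : Measure EE} [IsProbabilityMeasure ν] (hν : PL1 ν)
    (Γ : Fin k → EE) (e : Fin k → ℝ) (p m : ℕ) (hpm : p < m) :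
    Mf N ν Γ e (m + p) * Mf N ν Γ e (m - p) ≤
      ENNReal.ofReal (Real.exp (2 * (p:ℝ) ^ 2 / m)) * Mf N ν Γ e m ^ 2 := by
  have hE : ENNReal.ofReal (Real.exp (2 * (p:ℝ) ^ 2 / m)) =
      ENNReal.ofReal (Real.exp ((p:ℝ) ^ 2 / m)) ^ 2 := by
    rw [← ENNReal.ofReal_pow (by positivity), ← Real.exp_nat_mul]
    congr 2
    push_cast
    ring
  have h := PL_real (fun r => ENNReal.ofReal r ^ (m + p) * Ff N ν Γ (r • e))
    (fun r => ENNReal.ofReal r ^ (m - p) * Ff N ν Γ (r • e))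
    (fun r => ENNReal.ofReal (Real.exp ((p:ℝ) ^ 2 / m)) * (ENNReal.ofReal r ^ m * Ff N ν Γ (r • e)))
    (by fun_prop) (by fun_prop) (by fun_prop) ?_
  · rw [lintegral_const_mul _ (by fun_prop), mul_pow, ← hE] at h
    exact h
  · intro r s
    rw [one_mul, mul_pow, ← hE]
    rcases le_or_gt r 0 with hr | hr
    · rw [ENNReal.ofReal_of_nonpos hr, zero_pow (by omega)]; simp
    rcases le_or_gt s 0 with hs | hs
    · rw [ENNReal.ofReal_of_nonpos hs, zero_pow (by omega)]; simp
    have h1 := Ff_mid hN hν Γ (r • e) (s • e)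
    rw [← add_smul, ← smul_assoc] at h1
    have h2 := ENNReal.ofReal_le_ofReal (wamgm p m hpm r s hr hs)
    rw [ENNReal.ofReal_mul (by positivity), ENNReal.ofReal_mul (by positivity),
      ENNReal.ofReal_pow hr.le, ENNReal.ofReal_pow hs.le, ENNReal.ofReal_pow (by positivity),
      ENNReal.ofReal_pow (by positivity)] at h2
    calc _ = (ENNReal.ofReal r ^ (m + p) * ENNReal.ofReal s ^ (m - p)) *
          (Ff N ν Γ (r • e) * Ff N ν Γ (s • e)) := by ring
      _ ≤ _ := mul_le_mul' h2 h1
      _ = _ := by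
        simp only [smul_eq_mul]
        ring

/-- Gaussian moment constants -/
def cgm (d : ℕ) : ℝ≥0∞ := ∫⁻ r : ℝ, ENNReal.ofReal r ^ d * ENNReal.ofReal (Real.exp (-r ^ 2 / 2))

lemma cgm_fin (d : ℕ) : cgm d ≠ ∞ := by
  have h := gauss_mom_fin 1 one_pos d
  refine ne_top_of_le_ne_top h (lintegral_mono fun r => ?_)
  simp only [mul_one]
  gcongr
  exact le_abs_self r

lemma cgm_ne_zero (d : ℕ) : cgm d ≠ 0 := by
  unfold cgm
  rw [Ne, lintegral_eq_zero_iff (by fun_prop)]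
  intro h
  have h2 : volume (Set.Ioi (0:ℝ)) = 0 := by
    refine measure_mono_null ?_ (ae_iff.1 h)
    intro r hr
    have hr' : 0 < r := hr
    simp only [Set.mem_ofPred_eq, Pi.zero_apply]
    refine mul_ne_zero (pow_ne_zero _ ?_) ?_
    · simpa using hr'
    · simpa using Real.exp_pos _
  simp at h2

lemma cgm_cs (m p : ℕ) (hpm : p ≤ m) : cgm m ^ 2 ≤ cgm (m + p) * cgm (m - p) := by
  have h := cs_lint ((volume : Measure ℝ).withDensity
    (fun r => ENNReal.ofReal r ^ (m - p) * ENNReal.ofReal (Real.exp (-r ^ 2 / 2))))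
    (f := fun r => ENNReal.ofReal r ^ p) (by fun_prop)
  rw [lintegral_withDensity_eq_lintegral_mul _ (by fun_prop) (by fun_prop),
    lintegral_withDensity_eq_lintegral_mul _ (by fun_prop) (by fun_prop),
    withDensity_apply _ MeasurableSet.univ, Measure.restrict_univ] at h
  simp only [Pi.mul_apply] at h
  obtain ⟨q, rfl⟩ := Nat.exists_eq_add_of_le hpm
  rw [Nat.add_sub_cancel_left] at h ⊢
  have e1 : cgm (p + q) = ∫⁻ r : ℝ, ENNReal.ofReal r ^ q * ENNReal.ofReal (Real.exp (-r ^ 2 / 2)) *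
      ENNReal.ofReal r ^ p := by
    unfold cgm
    refine lintegral_congr fun r => ?_
    rw [pow_add]
    ring
  have e2 : cgm (p + q + p) = ∫⁻ r : ℝ, ENNReal.ofReal r ^ q *
      ENNReal.ofReal (Real.exp (-r ^ 2 / 2)) * (ENNReal.ofReal r ^ p) ^ 2 := by
    unfold cgm
    refine lintegral_congr fun r => ?_
    rw [pow_add, pow_add]
    ring
  rw [e1, e2]
  exact h

/-- The moments of the regularized norm. -/
def Ef {n : ℕ} (N : ℝ) (ν : Measure (EuclideanSpace ℝ (Fin n))) (p : ℕ) : ℝ≥0∞ :=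
  ∫⁻ y, ENNReal.ofReal (Real.sqrt (N + ‖y‖ ^ 2)) ^ p ∂ν

lemma Mf_avg {N : ℝ} (hN : 0 < N) {ν : Measure EE} [IsProbabilityMeasure ν]
    (e : Fin k → ℝ) (he : ∑ i, e i ^ 2 = 1) (p d : ℕ) (hd : d + 1 = p + k) :
    ∫⁻ Γ, Mf N ν Γ e d ∂(gamM k n) = ENNReal.ofReal (Real.sqrt N) ^ k * cgm d * Ef N ν p := by
  unfold Mf
  have hm1 : Measurable (fun z : (Fin k → EE) × ℝ => ENNReal.ofReal z.2 ^ d * Ff N ν z.1 (z.2 • e)) := by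
    fun_prop
  rw [lintegral_lintegral_swap hm1.aemeasurable]
  have h1 : ∀ r : ℝ, ∫⁻ Γ, ENNReal.ofReal r ^ d * Ff N ν Γ (r • e) ∂(gamM k n) =
      ∫⁻ y, ENNReal.ofReal r ^ d * ENNReal.ofReal (Real.sqrt (N / (N + ‖y‖ ^ 2)) ^ k *
        Real.exp (-r ^ 2 / (2 * (N + ‖y‖ ^ 2)))) ∂ν := by
    intro r
    have hm2 : Measurable (fun z : (Fin k → EE) × EE => Kf N z.1 (r • e) z.2) := by fun_prop
    rw [lintegral_const_mul _ (by fun_prop), lintegral_const_mul _ (by fun_prop)]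
    unfold Ff
    rw [lintegral_lintegral_swap hm2.aemeasurable]
    congr 1
    refine lintegral_congr fun y => ?_
    have := gauss_mat (k := k) N hN (r • e) y
    unfold Kf Qf
    rw [this]
    congr 4
    simp only [Pi.smul_apply, smul_eq_mul, mul_pow]
    rw [← Finset.mul_sum, he, mul_one]
  simp_rw [h1]
  have hm3 : Measurable (fun z : ℝ × EE => ENNReal.ofReal z.1 ^ d *
    ENNReal.ofReal (Real.sqrt (N / (N + ‖z.2‖ ^ 2)) ^ k *
        Real.exp (-z.1 ^ 2 / (2 * (N + ‖z.2‖ ^ 2))))) := by fun_prop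
  rw [lintegral_lintegral_swap hm3.aemeasurable]
  unfold Ef
  rw [← lintegral_const_mul _ (by fun_prop)]
  refine lintegral_congr fun y => ?_
  set S := Real.sqrt (N + ‖y‖ ^ 2) with hS
  have hS0 : 0 < S := Real.sqrt_pos.2 (by positivity)
  have hS2 : N + ‖y‖ ^ 2 = S ^ 2 := (Real.sq_sqrt (by positivity)).symm
  rw [hS2, Real.sqrt_div hN.le, Real.sqrt_sq hS0.le]
  have h2 : ∀ r : ℝ, ENNReal.ofReal r ^ d * ENNReal.ofReal ((Real.sqrt N / S) ^ k *
      Real.exp (-r ^ 2 / (2 * S ^ 2))) = (ENNReal.ofReal (Real.sqrt N / S) ^ k * ENNReal.ofReal S ^ d) *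
      (fun t : ℝ => ENNReal.ofReal t ^ d * ENNReal.ofReal (Real.exp (-t ^ 2 / 2))) (S⁻¹ • r) := by
    intro r
    rw [ENNReal.ofReal_mul (by positivity), ENNReal.ofReal_pow (by positivity)]
    simp only
    have e1 : ENNReal.ofReal r = ENNReal.ofReal S * ENNReal.ofReal (S⁻¹ • r) := by
      rw [← ENNReal.ofReal_mul hS0.le, smul_eq_mul, mul_inv_cancel_left₀ hS0.ne']
    have e2 : -r ^ 2 / (2 * S ^ 2) = -(S⁻¹ • r) ^ 2 / 2 := by
      rw [smul_eq_mul]; field_simp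
    rw [e2]
    conv_lhs => rw [e1, mul_pow]
    ring
  simp_rw [h2]
  rw [lintegral_const_mul _ (by fun_prop), lint_smul _ (g := fun t : ℝ => ENNReal.ofReal t ^ d *
    ENNReal.ofReal (Real.exp (-t ^ 2 / 2))) (by fun_prop) (inv_pos.2 hS0), Module.finrank_self, inv_inv,
    pow_one]
  unfold cgm
  have e3 : ENNReal.ofReal (Real.sqrt N / S) ^ k * ENNReal.ofReal S ^ d * ENNReal.ofReal S =
      ENNReal.ofReal (Real.sqrt N) ^ k * ENNReal.ofReal S ^ p := by
    rw [mul_assoc, ← pow_succ, hd, pow_add, mul_comm (ENNReal.ofReal S ^ p), ← mul_assoc, ← mul_pow,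
      ← ENNReal.ofReal_mul (by positivity), div_mul_cancel₀ _ hS0.ne']
  rw [← mul_assoc, e3]
  ring

theorem key_ineq {N : ℝ} (hN : 0 < N) {ν : Measure EE} [IsProbabilityMeasure ν] (hν : PL1 ν)
    (hs : ν.map (fun y => -y) = ν)
    (hfin : ∀ (v : EE) (m : ℕ), ∫⁻ y, ENNReal.ofReal |⟪v, y⟫| ^ m ∂ν ≠ ∞)
    (p : ℕ) (hp : 1 ≤ p) (hpk : p ≤ k)
    (hk : 2 ≤ k) {L : ℝ} (hL0 : 0 < L)
    (hL : ∀ v : EE, ∫⁻ y, ENNReal.ofReal |⟪v, y⟫| ^ k ∂ν ≤ ENNReal.ofReal (L * ‖v‖) ^ k)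
    (hLN : 16384 * L ^ 2 ≤ N) :
    Ef N ν (2 * p) ≤ ENNReal.ofReal (Real.exp (160 * (8192 * L ^ 2) * k / N + 2 * (p:ℝ) ^ 2 / k)) *
      Ef N ν p ^ 2 := by
  obtain ⟨i0⟩ : Nonempty (Fin k) := ⟨⟨0, by omega⟩⟩
  set e : Fin k → ℝ := Pi.single i0 1 with he
  have he0 : e i0 = 1 := by simp [he]
  have he2 : ∑ i, e i ^ 2 = 1 := by
    rw [Finset.sum_eq_single i0]
    · simp [he0]
    · intro b _ hb
      simp [he, Pi.single_eq_of_ne hb]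
    · simp
  set m := p + k - 1 with hm
  have hpm : p < m := by omega
  set δ := 80 * (8192 * L ^ 2) * k / N with hδ
  have hE : ENNReal.ofReal (Real.exp (2 * δ + 2 * (p:ℝ) ^ 2 / m)) =
      ENNReal.ofReal (Real.exp (δ + (p:ℝ) ^ 2 / m)) ^ 2 := by
    rw [← ENNReal.ofReal_pow (by positivity), ← Real.exp_nat_mul]
    congr 2
    push_cast
    ring
  have h := PL_gamM k n (fun Γ => Mf N ν Γ e (m + p)) (fun Γ => Mf N ν Γ e (m - p))
    (fun Γ => ENNReal.ofReal (Real.exp (δ + (p:ℝ) ^ 2 / m)) * Mf N ν Γ e m)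
    (by fun_prop) (by fun_prop) (by fun_prop) ?_
  · rw [lintegral_const_mul _ (by fun_prop), mul_pow, ← hE,
      Mf_avg hN e he2 (2 * p) (m + p) (by omega), Mf_avg hN e he2 0 (m - p) (by omega),
      Mf_avg hN e he2 p m (by omega)] at h
    have hE0 : Ef N ν 0 = 1 := by simp [Ef]
    rw [hE0, mul_one] at h
    set q := ENNReal.ofReal (Real.sqrt N) ^ k with hq
    have hq0 : q ≠ 0 := by
      refine pow_ne_zero _ ?_
      simpa using hN
    have hqt : q ≠ ∞ := ENNReal.pow_ne_top ENNReal.ofReal_ne_top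
    set D := q ^ 2 * (cgm (m + p) * cgm (m - p)) with hD
    have hD0 : D ≠ 0 := mul_ne_zero (pow_ne_zero _ hq0) (mul_ne_zero (cgm_ne_zero _) (cgm_ne_zero _))
    have hDt : D ≠ ∞ := ENNReal.mul_ne_top (ENNReal.pow_ne_top hqt)
      (ENNReal.mul_ne_top (cgm_fin _) (cgm_fin _))
    have h2 : Ef N ν (2 * p) * D ≤ ENNReal.ofReal (Real.exp (2 * δ + 2 * (p:ℝ) ^ 2 / m)) *
        Ef N ν p ^ 2 * D := by
      calc Ef N ν (2 * p) * D = q * cgm (m + p) * Ef N ν (2 * p) * (q * cgm (m - p)) := by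
            rw [hD]; ring
        _ ≤ _ := h
        _ = ENNReal.ofReal (Real.exp (2 * δ + 2 * (p:ℝ) ^ 2 / m)) * Ef N ν p ^ 2 *
          (q ^ 2 * cgm m ^ 2) := by ring
        _ ≤ _ := by
          rw [hD]
          gcongr
          exact cgm_cs m p hpm.le
    have h3 := (ENNReal.mul_le_mul_iff_left hD0 hDt).1 h2
    refine h3.trans (mul_le_mul_left (ENNReal.ofReal_le_ofReal (Real.exp_le_exp.2 ?_)) _)
    refine add_le_add (le_of_eq (by rw [hδ]; ring)) ?_
    have hk0 : (0:ℝ) < k := by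
      have : 0 < k := by omega
      exact_mod_cast this
    refine div_le_div_of_nonneg_left (by positivity) hk0 ?_
    exact_mod_cast (by omega : k ≤ m)
  · intro Γ₁ Γ₂
    set H : Fin k → EE := (1/2:ℝ) • (Γ₂ - Γ₁) with hH
    have hm1 : Γ₁ + H = (1/2:ℝ) • (Γ₁ + Γ₂) := by
      rw [hH, smul_sub, smul_add]
      have : Γ₁ = (1/2:ℝ) • Γ₁ + (1/2:ℝ) • Γ₁ := by rw [← add_smul]; norm_num
      nth_rewrite 1 [this]
      abel
    have hm2 : Γ₂ + -H = (1/2:ℝ) • (Γ₁ + Γ₂) := by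
      rw [hH, smul_sub, smul_add]
      have : Γ₂ = (1/2:ℝ) • Γ₂ + (1/2:ℝ) • Γ₂ := by rw [← add_smul]; norm_num
      nth_rewrite 1 [this]
      abel
    have l1 := Mf_lip hN hν hs hfin Γ₁ H e i0 he0 (m + p) hk (by omega) hL0 hL hLN
    have l2 := Mf_lip hN hν hs hfin Γ₂ (-H) e i0 he0 (m - p) hk (by omega) hL0 hL hLN
    rw [hm1] at l1
    rw [hm2] at l2
    have hr := Mf_radial hN hν ((1/2:ℝ) • (Γ₁ + Γ₂)) e p m hpm
    have hHn : ∑ i, ‖H i‖ ^ 2 = (∑ i, ‖Γ₁ i - Γ₂ i‖ ^ 2) / 4 := by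
      rw [Finset.sum_div]
      refine Finset.sum_congr rfl fun i _ => ?_
      rw [hH, Pi.smul_apply, Pi.sub_apply, norm_smul, norm_sub_rev]
      norm_num
      ring
    simp only [Pi.neg_apply, norm_neg] at l2
    rw [hHn] at l1 l2
    set h := (∑ i, ‖Γ₁ i - Γ₂ i‖ ^ 2) / 4 with hh
    have l3 := (mul_le_mul' l1 l2).trans hr
    set a := Real.exp (-(δ + h / 2)) with ha
    have hinv : ENNReal.ofReal (Real.exp (δ + h / 2)) * ENNReal.ofReal a = 1 := by
      rw [← ENNReal.ofReal_mul (by positivity), ha, ← Real.exp_add]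
      simp
    rw [mul_pow, ← hE]
    calc Mf N ν Γ₁ e (m + p) * Mf N ν Γ₂ e (m - p)
        = (ENNReal.ofReal (Real.exp (δ + h / 2)) * ENNReal.ofReal a) *
          (ENNReal.ofReal (Real.exp (δ + h / 2)) * ENNReal.ofReal a) *
          (Mf N ν Γ₁ e (m + p) * Mf N ν Γ₂ e (m - p)) := by rw [hinv, one_mul, one_mul]
      _ = ENNReal.ofReal (Real.exp (δ + h / 2)) ^ 2 * (ENNReal.ofReal a * Mf N ν Γ₁ e (m + p) *
          (ENNReal.ofReal a * Mf N ν Γ₂ e (m - p))) := by ring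
      _ ≤ ENNReal.ofReal (Real.exp (δ + h / 2)) ^ 2 * _ := mul_le_mul_right l3 _
      _ = _ := by
        rw [← mul_assoc, ← mul_assoc, ← ENNReal.ofReal_pow (by positivity),
          ← ENNReal.ofReal_mul (by positivity), ← ENNReal.ofReal_mul (by positivity),
          ← Real.exp_nat_mul, ← Real.exp_add, ← Real.exp_add]
        congr 3
        push_cast
        ring
end

section
variable {k n : ℕ}
local notation "EE" => EuclideanSpace ℝ (Fin n)

lemma mom_double_pos {μ : Measure EE} [IsProbabilityMeasure μ] (hμ : PL1 μ) (v : EE) (p : ℕ)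
    (hp : p ≠ 0) (h : ∫⁻ y, ENNReal.ofReal ⟪v, y⟫ ^ p ∂μ ≠ ∞) :
    ∫⁻ y, ENNReal.ofReal ⟪v, y⟫ ^ (2 * p) ∂μ ≠ ∞ := by
  have hm : MeasurableSet {y : EE | 0 ≤ ⟪v, y⟫} := measurableSet_le (by fun_prop) (by fun_prop)
  by_cases h0 : μ {y | 0 ≤ ⟪v, y⟫} = 0
  · have : ∫⁻ y, ENNReal.ofReal ⟪v, y⟫ ^ (2 * p) ∂μ = 0 := by
      rw [lintegral_eq_zero_iff (by fun_prop)]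
      have : ∀ᵐ y ∂μ, ¬ (0 ≤ ⟪v, y⟫) := by
        rw [ae_iff]; simpa using h0
      filter_upwards [this] with y hy
      rw [ENNReal.ofReal_of_nonpos (not_le.1 hy).le, zero_pow (by omega)]
      rfl
    rw [this]; simp
  · have h1 := hμ (fun y => ENNReal.ofReal ⟪v, y⟫ ^ (2 * p))
      (fun y => Set.indicator {y | 0 ≤ ⟪v, y⟫} 1 y)
      (fun y => 2 ^ p * ENNReal.ofReal ⟪v, y⟫ ^ p) (by fun_prop)
      (measurable_one.indicator hm) (by fun_prop) ?_
    · rw [lintegral_indicator_one hm, lintegral_const_mul _ (by fun_prop)] at h1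
      intro ht
      rw [ht, ENNReal.top_mul h0] at h1
      have h2 : (2 ^ p * ∫⁻ y, ENNReal.ofReal ⟪v, y⟫ ^ p ∂μ) ^ 2 ≠ ∞ :=
        ENNReal.pow_ne_top (ENNReal.mul_ne_top (by simp) h)
      exact h2 (top_le_iff.1 h1)
    · intro x y
      by_cases hy : 0 ≤ ⟪v, y⟫
      · rw [Set.indicator_of_mem (by exact hy), Pi.one_apply, mul_one, one_mul, ← mul_pow, pow_mul',
          inner_smul_right, inner_add_right]
        gcongr
        rw [show ∀ a : ℝ, 2 * ENNReal.ofReal a = ENNReal.ofReal (2 * a) from fun a => by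
          rw [ENNReal.ofReal_mul (by norm_num)]; simp]
        refine ENNReal.ofReal_le_ofReal ?_
        linarith
      · rw [Set.indicator_of_notMem (by exact hy)]; simp

lemma mom_double {μ : Measure EE} [IsProbabilityMeasure μ] (hμ : PL1 μ) (v : EE) (p : ℕ)
    (hp : p ≠ 0) (h : ∫⁻ y, ENNReal.ofReal |⟪v, y⟫| ^ p ∂μ ≠ ∞) :
    ∫⁻ y, ENNReal.ofReal |⟪v, y⟫| ^ (2 * p) ∂μ ≠ ∞ := by
  have h1 : ∀ v : EE, ∫⁻ y, ENNReal.ofReal |⟪v, y⟫| ^ p ∂μ ≠ ∞ →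
    ∫⁻ y, ENNReal.ofReal ⟪v, y⟫ ^ (2 * p) ∂μ ≠ ∞ := by
    intro v h
    refine mom_double_pos hμ v p hp (ne_top_of_le_ne_top h (lintegral_mono fun y => ?_))
    simp only
    gcongr
    exact le_abs_self _
  have h2 := h1 (-v) (by simpa using h)
  have h3 := h1 v h
  have : ∫⁻ y, ENNReal.ofReal |⟪v, y⟫| ^ (2 * p) ∂μ = ∫⁻ y, ENNReal.ofReal ⟪v, y⟫ ^ (2 * p) ∂μ +
     ∫⁻ y, ENNReal.ofReal ⟪-v, y⟫ ^ (2 * p) ∂μ := by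
    rw [← lintegral_add_left (by fun_prop)]
    refine lintegral_congr fun y => ?_
    rw [abs_pow_split _ (by omega), inner_neg_left]
  rw [this]
  exact ENNReal.add_ne_top.2 ⟨h3, h2⟩

lemma mom_all {μ : Measure EE} [IsProbabilityMeasure μ] (hμ : PL1 μ) (v : EE)
    (h : ∫⁻ y, ENNReal.ofReal |⟪v, y⟫| ^ 2 ∂μ ≠ ∞) (m : ℕ) :
    ∫⁻ y, ENNReal.ofReal |⟪v, y⟫| ^ m ∂μ ≠ ∞ := by
  have h1 : ∀ j : ℕ, ∫⁻ y, ENNReal.ofReal |⟪v, y⟫| ^ (2 ^ (j + 1)) ∂μ ≠ ∞ := by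
    intro j
    induction j with
    | zero => simpa using h
    | succ j ih =>
      rw [pow_succ', pow_succ' 2 j] at *
      exact mom_double hμ v _ (by positivity) ih
  have h2 : m ≤ 2 ^ (m + 1) := (Nat.lt_two_pow_self.le).trans (Nat.pow_le_pow_right (by norm_num) (by omega))
  have h3 : ∫⁻ y, (1 + ENNReal.ofReal |⟪v, y⟫| ^ (2 ^ (m + 1))) ∂μ ≠ ∞ := by
    rw [lintegral_add_left (by fun_prop)]
    exact ENNReal.add_ne_top.2 ⟨by simp, h1 m⟩
  refine ne_top_of_le_ne_top h3 (lintegral_mono fun y => ?_)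
  simp only
  rcases le_total (ENNReal.ofReal |⟪v, y⟫|) 1 with h4 | h4
  · exact (pow_le_one₀ (by simp) h4).trans le_self_add
  · exact (pow_le_pow_right₀ h4 h2).trans le_add_self

lemma abs_lint {μ : Measure EE} {s : EE → ℝ} (hs : Measurable s) (m : ℕ)
    (h : ∫⁻ y, ENNReal.ofReal |s y| ^ m ∂μ ≠ ∞) :
    Integrable (fun y => |s y| ^ m) μ ∧
    ∫⁻ y, ENNReal.ofReal |s y| ^ m ∂μ = ENNReal.ofReal (∫ y, |s y| ^ m ∂μ) := by
  have e : ∀ y, ENNReal.ofReal |s y| ^ m = ENNReal.ofReal (|s y| ^ m) := fun y =>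
    (ENNReal.ofReal_pow (abs_nonneg _) _).symm
  simp_rw [e] at h ⊢
  have hi : Integrable (fun y => |s y| ^ m) μ := by
    refine ⟨(by fun_prop : Measurable fun y => |s y| ^ m).aestronglyMeasurable, ?_⟩
    rw [hasFiniteIntegral_iff_ofReal (Filter.Eventually.of_forall fun y => by positivity)]
    exact lt_top_iff_ne_top.2 h
  exact ⟨hi, (ofReal_integral_eq_lintegral_ofReal hi (Filter.Eventually.of_forall fun y => by positivity)).symm⟩

end

section
variable {k n : ℕ}
local notation "EE" => EuclideanSpace ℝ (Fin n)

/-- Data for the image measure. -/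
structure Good (N α B : ℝ) (l : Measure EE) : Prop where
  pl : PL1 l
  int1 : Integrable (fun y : EE => y) l
  mean : ∫ y, y ∂l = 0
  int2 : Integrable (fun y : EE => ‖y‖ ^ 2) l
  var : ∫ y, ‖y‖ ^ 2 ∂l = N
  mom : ∀ k : ℕ, 2 ≤ k → ∀ v : EE, ∫⁻ y, ENNReal.ofReal |⟪v, y⟫| ^ k ∂l ≤
    ENNReal.ofReal (B * (k:ℝ) ^ (1/α) * ‖v‖) ^ k

lemma mApp_meas (A : Matrix (Fin n) (Fin n) ℝ) : Measurable (mApp A) := by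
  have : Continuous (mApp A) := by
    unfold mApp
    exact (LinearMap.toContinuousLinearMap (Matrix.toEuclideanLin A)).continuous
  exact this.measurable

lemma mApp_adj (A : Matrix (Fin n) (Fin n) ℝ) (v : EE) :
    ∃ v' : EE, ‖v'‖ ≤ opNorm A * ‖v‖ ∧ ∀ x, ⟪v, mApp A x⟫ = ⟪v', x⟫ := by
  refine ⟨ContinuousLinearMap.adjoint (LinearMap.toContinuousLinearMap (Matrix.toEuclideanLin A)) v,
    ?_, fun x => ?_⟩
  · refine (ContinuousLinearMap.le_opNorm _ _).trans (le_of_eq ?_)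
    rw [LinearIsometryEquiv.norm_map]
    rfl
  · rw [ContinuousLinearMap.adjoint_inner_left]
    rfl

variable {Ω : Type*} [MeasurableSpace Ω] {P : Measure Ω} [IsProbabilityMeasure P]
  {X : Ω → EuclideanSpace ℝ (Fin n)} {f : EuclideanSpace ℝ (Fin n) → ℝ} {α b : ℝ}

lemma iso_sq (hX : Measurable X) (hI : Isotropic P X) (θ : EE) :
    Integrable (fun ω => ⟪X ω, θ⟫ ^ 2) P ∧ ∫ ω, ⟪X ω, θ⟫ ^ 2 ∂P = ‖θ‖ ^ 2 := by
  have h := hI.2 θ θ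
  simp only [← pow_two] at h
  rw [real_inner_self_eq_norm_sq] at h
  refine ⟨?_, h⟩
  by_cases h0 : θ = 0
  · simp [h0]
  · by_contra hc
    rw [integral_undef hc] at h
    exact (pow_ne_zero 2 (norm_ne_zero_iff.2 h0)) h.symm

lemma psi_pos (hX : Measurable X) (hI : Isotropic P X) (hψ : IsPsiAlpha P X α b) (hn : 0 < n) :
    0 < b := by
  have h := hψ 2 le_rfl (EuclideanSpace.single ⟨0, hn⟩ 1)
  rw [(iso_sq hX hI _).2] at h
  have e : ∀ ω, |⟪X ω, EuclideanSpace.single ⟨0, hn⟩ 1⟫| ^ (2:ℝ) =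
    ⟪X ω, EuclideanSpace.single (⟨0, hn⟩ : Fin n) (1:ℝ)⟫ ^ 2 := fun ω => by
    rw [Real.rpow_two, sq_abs]
  simp_rw [e] at h
  rw [(iso_sq hX hI _).2] at h
  simp only [PiLp.norm_single, norm_one, one_pow, Real.one_rpow, mul_one] at h
  by_contra hb
  have : (0:ℝ) ≤ 2 ^ (1/α) := by positivity
  nlinarith

lemma psi_mom (hX : Measurable X) (hpl : PL1 (P.map X)) (hI : Isotropic P X)
    (hψ : IsPsiAlpha P X α b) (k : ℕ) (hk : 2 ≤ k) (θ : EE) :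
    ∫⁻ y, ENNReal.ofReal |⟪θ, y⟫| ^ k ∂(P.map X) ≤ ENNReal.ofReal (b * (k:ℝ) ^ (1/α) * ‖θ‖) ^ k := by
  have : IsProbabilityMeasure (P.map X) := Measure.isProbabilityMeasure_map hX.aemeasurable
  obtain ⟨i2, e2⟩ := iso_sq hX hI θ
  have f2 : ∫⁻ y, ENNReal.ofReal |⟪θ, y⟫| ^ 2 ∂(P.map X) ≠ ∞ := by
    rw [lintegral_map (by fun_prop) hX]
    have h := i2.lintegral_lt_top
    refine ne_top_of_le_ne_top h.ne (lintegral_mono fun ω => ?_)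
    simp only
    rw [← ENNReal.ofReal_pow (abs_nonneg _), sq_abs, real_inner_comm]
  have fk := mom_all hpl θ f2 k
  obtain ⟨_, ek⟩ := abs_lint (s := fun y => ⟪θ, y⟫) (by fun_prop) k fk
  rw [ek, integral_map hX.aemeasurable
    (by fun_prop : Measurable fun y : EE => |⟪θ, y⟫| ^ k).aestronglyMeasurable]
  have h := hψ k (by exact_mod_cast hk) θ
  rw [e2] at h
  have hk0 : (k:ℝ) ≠ 0 := by
    have : k ≠ 0 := by omega
    exact_mod_cast this
  have e : ∀ ω, |⟪X ω, θ⟫| ^ (k:ℝ) = |⟪θ, X ω⟫| ^ k := fun ω => by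
    rw [Real.rpow_natCast, real_inner_comm]
  simp_rw [e] at h
  set I := ∫ ω, |⟪θ, X ω⟫| ^ k ∂P with hIdef
  have hI0 : 0 ≤ I := integral_nonneg fun ω => by positivity
  have h5 : (‖θ‖ ^ 2) ^ ((1:ℝ)/2) = ‖θ‖ := by
    rw [← Real.sqrt_eq_rpow, Real.sqrt_sq (norm_nonneg _)]
  rw [h5] at h
  have h6 : 0 ≤ I ^ (1 / (k:ℝ)) := Real.rpow_nonneg hI0 _
  rw [← ENNReal.ofReal_pow (h6.trans h)]
  refine ENNReal.ofReal_le_ofReal ?_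
  calc I = (I ^ (1 / (k:ℝ))) ^ k := by
        rw [← Real.rpow_natCast, ← Real.rpow_mul hI0, one_div_mul_cancel hk0, Real.rpow_one]
    _ ≤ _ := pow_le_pow_left₀ h6 h k

theorem good_of (hd : HasDensityFn P X f) (hf : IsLogConcaveFn f) (hI : Isotropic P X)
    (hψ : IsPsiAlpha P X α b) (A : Matrix (Fin n) (Fin n) ℝ) (hA : hsNorm A ^ 2 = n) (hn : 0 < n) :
    0 < b * opNorm A ∧ Good n α (b * opNorm A) (P.map (fun ω => mApp A (X ω))) := by
  obtain ⟨hX, hmap⟩ := hd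
  have hplX : PL1 (P.map X) := by rw [hmap]; exact PL_logconcave hf
  have hb := psi_pos hX hI hψ hn
  have hA' : ∑ i, ∑ j, (A i j) ^ 2 = n := by
    rw [← hA, hsNorm, Real.sq_sqrt (by positivity)]
  have hop : 0 < opNorm A := by
    unfold opNorm
    rw [norm_pos_iff]
    intro h0
    have h1 : Matrix.toEuclideanLin A = 0 := by
      have := congrArg (fun L : EE →L[ℝ] EE => (L : EE →ₗ[ℝ] EE)) h0
      simpa using this
    have h2 : A = 0 := by simpa using h1
    rw [h2] at hA'
    simp only [Matrix.zero_apply, ne_eq, OfNat.ofNat_ne_zero, not_false_eq_true, zero_pow,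
      Finset.sum_const_zero] at hA'
    have : (0:ℝ) < n := by exact_mod_cast hn
    linarith
  have hm : P.map (fun ω => mApp A (X ω)) = (P.map X).map (mApp A) := by
    rw [Measure.map_map (mApp_meas A) hX]; rfl
  have hmeas : Measurable (fun ω => mApp A (X ω)) := (mApp_meas A).comp hX
  -- second moment of AX
  have hrow : ∀ x : EE, ‖mApp A x‖ ^ 2 = ∑ i, ⟪x, WithLp.toLp 2 (A i)⟫ ^ 2 := by
    intro x
    rw [EuclideanSpace.norm_sq_eq]
    refine Finset.sum_congr rfl fun i _ => ?_
    rw [Real.norm_eq_abs, sq_abs]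
    congr 1
  have hi2 : Integrable (fun ω => ‖mApp A (X ω)‖ ^ 2) P := by
    simp_rw [hrow]
    exact integrable_finsetSum _ fun i _ => (iso_sq hX hI _).1
  have he2 : ∫ ω, ‖mApp A (X ω)‖ ^ 2 ∂P = n := by
    simp_rw [hrow]
    rw [integral_finsetSum _ fun i _ => (iso_sq hX hI _).1, ← hA']
    refine Finset.sum_congr rfl fun i _ => ?_
    rw [(iso_sq hX hI _).2, EuclideanSpace.norm_sq_eq]
    simp
  have hiX : Integrable X P := by
    have h1 : Integrable (fun ω => ‖X ω‖ ^ 2) P := by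
      have : ∀ ω, ‖X ω‖ ^ 2 = ∑ i, ⟪X ω, EuclideanSpace.single i (1:ℝ)⟫ ^ 2 := by
        intro ω
        rw [EuclideanSpace.norm_sq_eq]
        refine Finset.sum_congr rfl fun i _ => ?_
        rw [EuclideanSpace.inner_single_right]
        simp
      simp_rw [this]
      exact integrable_finsetSum _ fun i _ => (iso_sq hX hI _).1
    refine Integrable.mono' (h1.add (integrable_const (1:ℝ))) hX.aestronglyMeasurable
      (Filter.Eventually.of_forall fun ω => ?_)
    simp only [Pi.add_apply]
    nlinarith [sq_nonneg (‖X ω‖ - 1), norm_nonneg (X ω)]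
  refine ⟨by positivity, ?_, ?_, ?_, ?_, ?_, ?_⟩
  · rw [hm]
    refine PLc.map hplX (mApp_meas A) (fun x y => ?_) (fun x y => le_rfl)
    simp [mApp]
  · rw [integrable_map_measure (by fun_prop) hmeas.aemeasurable]
    exact (LinearMap.toContinuousLinearMap (Matrix.toEuclideanLin A)).integrable_comp hiX
  · rw [integral_map hmeas.aemeasurable (by fun_prop)]
    have := (LinearMap.toContinuousLinearMap (Matrix.toEuclideanLin A)).integral_comp_comm hiX
    rw [hI.1, map_zero] at this
    exact this
  · rw [integrable_map_measure (by fun_prop) hmeas.aemeasurable]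
    exact hi2
  · rw [integral_map hmeas.aemeasurable (by fun_prop)]
    exact he2
  · intro k hk v
    rw [hm, lintegral_map (by fun_prop) (mApp_meas A)]
    obtain ⟨v', hv', hx⟩ := mApp_adj A v
    simp_rw [hx]
    refine (psi_mom hX hplX hI hψ k hk v').trans ?_
    refine pow_le_pow_left₀ (by positivity) (ENNReal.ofReal_le_ofReal ?_) k
    calc b * (k:ℝ) ^ (1/α) * ‖v'‖ ≤ b * (k:ℝ) ^ (1/α) * (opNorm A * ‖v‖) := by gcongr
      _ = _ := by ring
end

section
variable {k n : ℕ}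
local notation "EE" => EuclideanSpace ℝ (Fin n)

/-- symmetrization -/
def symM {n : ℕ} (l : Measure (EuclideanSpace ℝ (Fin n))) : Measure (EuclideanSpace ℝ (Fin n)) :=
  (l.prod l).map (fun z => z.1 - z.2)

lemma symM_prob (l : Measure EE) [IsProbabilityMeasure l] : IsProbabilityMeasure (symM l) :=
  Measure.isProbabilityMeasure_map (by fun_prop)

lemma symM_PL {l : Measure EE} [IsProbabilityMeasure l] (h : PL1 l) : PL1 (symM l) := by
  refine PLc.map (PLc.prod h h) (by fun_prop) (fun x y => ?_) (fun x y => by simp)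
  simp only [Prod.fst_add, Prod.snd_add, Prod.smul_fst, Prod.smul_snd]
  rw [← smul_sub]
  congr 1
  abel

lemma symM_sym (l : Measure EE) [IsProbabilityMeasure l] :
    (symM l).map (fun y => -y) = symM l := by
  unfold symM
  rw [Measure.map_map (by fun_prop) (by fun_prop)]
  conv_lhs => rw [← Measure.prod_swap (μ := l) (ν := l)]
  rw [Measure.map_map (by fun_prop) (by fun_prop)]
  congr 1
  ext z
  simp

lemma symM_lint {l : Measure EE} [IsProbabilityMeasure l] {g : EE → ℝ≥0∞} (hg : Measurable g) :
    ∫⁻ y, g y ∂(symM l) = ∫⁻ x, ∫⁻ y, g (x - y) ∂l ∂l := by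
  unfold symM
  rw [lintegral_map hg (by fun_prop), lintegral_prod _ (by fun_prop)]

variable {N α B : ℝ}

lemma symM_mom {l : Measure EE} [IsProbabilityMeasure l] (h : Good N α B l) (hB : 0 < B) (k : ℕ)
    (hk : 2 ≤ k) (v : EE) :
    ∫⁻ y, ENNReal.ofReal |⟪v, y⟫| ^ k ∂(symM l) ≤
      ENNReal.ofReal (4 * B * (k:ℝ) ^ (1/α) * ‖v‖) ^ k := by
  rw [symM_lint (by fun_prop)]
  set M := ENNReal.ofReal (B * (k:ℝ) ^ (1/α) * ‖v‖) with hM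
  have hm := h.mom k hk v
  rw [← hM] at hm
  have h1 : ∀ x y : EE, ENNReal.ofReal |⟪v, x - y⟫| ^ k ≤
      2 ^ k * (ENNReal.ofReal |⟪v, x⟫| ^ k + ENNReal.ofReal |⟪v, y⟫| ^ k) := by
    intro x y
    refine le_trans ?_ (add_pow_le_two _ _ k)
    gcongr
    rw [← ENNReal.ofReal_add (abs_nonneg _) (abs_nonneg _), inner_sub_right]
    exact ENNReal.ofReal_le_ofReal (abs_sub _ _)
  have h4 : ENNReal.ofReal (4 * B * (k:ℝ) ^ (1/α) * ‖v‖) = 4 * M := by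
    rw [hM, show ∀ a : ℝ, 4 * ENNReal.ofReal a = ENNReal.ofReal (4 * a) from fun a => by
          rw [ENNReal.ofReal_mul (by norm_num)]; simp]
    congr 1; ring
  calc ∫⁻ x, ∫⁻ y, ENNReal.ofReal |⟪v, x - y⟫| ^ k ∂l ∂l
      ≤ ∫⁻ x, ∫⁻ y, 2 ^ k * (ENNReal.ofReal |⟪v, x⟫| ^ k + ENNReal.ofReal |⟪v, y⟫| ^ k) ∂l ∂l :=
        lintegral_mono fun x => lintegral_mono fun y => h1 x y
    _ = 2 ^ k * (∫⁻ x, ENNReal.ofReal |⟪v, x⟫| ^ k ∂l + ∫⁻ x, ENNReal.ofReal |⟪v, x⟫| ^ k ∂l) := by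
        have : ∀ x : EE, ∫⁻ y, 2 ^ k * (ENNReal.ofReal |⟪v, x⟫| ^ k + ENNReal.ofReal |⟪v, y⟫| ^ k) ∂l
          = 2 ^ k * (ENNReal.ofReal |⟪v, x⟫| ^ k + ∫⁻ y, ENNReal.ofReal |⟪v, y⟫| ^ k ∂l) := by
          intro x
          rw [lintegral_const_mul _ (by fun_prop), lintegral_add_left (by fun_prop)]
          simp
        simp_rw [this]
        rw [lintegral_const_mul _ (by fun_prop), lintegral_add_left (by fun_prop)]
        simp
    _ ≤ 2 ^ k * (M ^ k + M ^ k) := by gcongr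
    _ = 2 ^ (k + 1) * M ^ k := by rw [pow_succ]; ring
    _ ≤ 4 ^ k * M ^ k := by
        refine mul_le_mul_left ?_ _
        rw [show (4:ℝ≥0∞) = 2 ^ 2 by norm_num, ← pow_mul]
        exact pow_le_pow_right₀ (by norm_num) (by omega)
    _ = _ := by rw [h4, mul_pow]

lemma symM_fin {l : Measure EE} [IsProbabilityMeasure l] (h : Good N α B l) (hB : 0 < B)
    (v : EE) (m : ℕ) : ∫⁻ y, ENNReal.ofReal |⟪v, y⟫| ^ m ∂(symM l) ≠ ∞ := by
  have := symM_prob l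
  refine mom_all (symM_PL h.pl) v ?_ m
  exact ne_top_of_le_ne_top (ENNReal.pow_ne_top ENNReal.ofReal_ne_top) (symM_mom h hB 2 le_rfl v)

lemma inner_int {l : Measure EE} [IsProbabilityMeasure l] (h : Good N α B l) (hN : 0 < N) (x : EE) :
    ∫⁻ y, ENNReal.ofReal (N + ‖x - y‖ ^ 2) ∂l = ENNReal.ofReal (2 * N + ‖x‖ ^ 2) := by
  have e : ∀ y : EE, N + ‖x - y‖ ^ 2 = (N + ‖x‖ ^ 2) - 2 * ⟪x, y⟫ + ‖y‖ ^ 2 := by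
    intro y
    rw [norm_sub_sq_real]; ring
  have i1 : Integrable (fun y => (2:ℝ) * ⟪x, y⟫) l := (h.int1.const_inner x).const_mul 2
  have i0 : Integrable (fun y : EE => (N + ‖x‖ ^ 2) - 2 * ⟪x, y⟫) l := (integrable_const _).sub i1
  have i2 : Integrable (fun y => N + ‖x - y‖ ^ 2) l := by
    simp_rw [e]
    exact i0.add h.int2
  rw [← ofReal_integral_eq_lintegral_ofReal i2 (Filter.Eventually.of_forall fun y => by positivity)]
  congr 1
  simp_rw [e]
  rw [integral_add i0 h.int2, integral_sub (integrable_const _) i1, integral_const_mul,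
    integral_inner h.int1, h.mean, h.var]
  simp
  ring

lemma Ef_two {l : Measure EE} [IsProbabilityMeasure l] (h : Good N α B l) (hN : 0 < N) :
    Ef N (symM l) 2 = ENNReal.ofReal (3 * N) := by
  unfold Ef
  rw [symM_lint (by fun_prop)]
  have : ∀ x y : EE, ENNReal.ofReal (Real.sqrt (N + ‖x - y‖ ^ 2)) ^ 2 =
    ENNReal.ofReal (N + ‖x - y‖ ^ 2) := fun x y => by
      rw [← ENNReal.ofReal_pow (by positivity), Real.sq_sqrt (by positivity)]
  simp_rw [this, inner_int h hN]
  have i2 : Integrable (fun y : EE => 2 * N + ‖y‖ ^ 2) l := (integrable_const _).add h.int2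
  rw [← ofReal_integral_eq_lintegral_ofReal i2 (Filter.Eventually.of_forall fun y => by positivity),
    integral_add (integrable_const _) h.int2, h.var]
  congr 1
  simp
  ring

lemma jensen_two {l : Measure EE} [IsProbabilityMeasure l] (j : ℕ) {g : EE → ℝ≥0∞} (hg : Measurable g) :
    (∫⁻ y, g y ∂l) ^ (2 ^ j) ≤ ∫⁻ y, g y ^ (2 ^ j) ∂l := by
  induction j with
  | zero => simp
  | succ j ih =>
    have h := cs_lint l (f := fun y => g y ^ (2 ^ j)) (by fun_prop)
    rw [measure_univ, mul_one] at h
    calc (∫⁻ y, g y ∂l) ^ (2 ^ (j + 1)) = ((∫⁻ y, g y ∂l) ^ (2 ^ j)) ^ 2 := by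
          rw [← pow_mul, pow_succ]
      _ ≤ (∫⁻ y, g y ^ (2 ^ j) ∂l) ^ 2 := by gcongr
      _ ≤ _ := h
      _ = _ := by simp_rw [← pow_mul, ← pow_succ]

lemma markov_Ef {l : Measure EE} [IsProbabilityMeasure l] (h : Good N α B l) (hN : 0 < N) (j : ℕ)
    (t : ℝ) (ht : 0 ≤ t) :
    l {y | (1 + t) * Real.sqrt N ≤ ‖y‖} * ENNReal.ofReal ((2 + (1 + t) ^ 2) * N) ^ (2 ^ j) ≤
      Ef N (symM l) (2 ^ (j + 1)) := by
  have h1 : ∫⁻ x, ENNReal.ofReal (2 * N + ‖x‖ ^ 2) ^ (2 ^ j) ∂l ≤ Ef N (symM l) (2 ^ (j + 1)) := by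
    unfold Ef
    rw [symM_lint (by fun_prop)]
    refine lintegral_mono fun x => ?_
    simp only
    rw [← inner_int h hN x]
    refine (jensen_two j (by fun_prop)).trans (le_of_eq (lintegral_congr fun y => ?_))
    rw [pow_succ' 2 j, pow_mul, ← ENNReal.ofReal_pow (Real.sqrt_nonneg _), Real.sq_sqrt (by positivity)]
  refine le_trans ?_ h1
  rw [mul_comm]
  refine le_trans ?_ (mul_meas_ge_le_lintegral₀ (by fun_prop) (ENNReal.ofReal ((2 + (1 + t) ^ 2) * N) ^ (2 ^ j)))
  refine mul_le_mul_right (measure_mono ?_) _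
  intro y hy
  have hy : (1 + t) * Real.sqrt N ≤ ‖y‖ := hy
  refine pow_le_pow_left₀ (by simp) (ENNReal.ofReal_le_ofReal ?_) _
  have := pow_le_pow_left₀ (by positivity) hy 2
  rw [mul_pow, Real.sq_sqrt hN.le] at this
  linarith

end

section
variable {k n : ℕ} {N α B : ℝ}
local notation "EE" => EuclideanSpace ℝ (Fin n)

lemma Ef_step {l : Measure (EuclideanSpace ℝ (Fin n))} [IsProbabilityMeasure l] (h : Good N α B l)
    (hN : 0 < N) (hB : 0 < B) (hα : 1 ≤ α) (hα2 : α ≤ 2) {x : ℝ} (hx : x = (N / B ^ 2) ^ (α / 2))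
    (p : ℕ) (hp : 1 ≤ p) (hpx : (p:ℝ) ≤ x / 2 ^ 30) :
    Ef N (symM l) (2 * p) ≤ ENNReal.ofReal (Real.exp (167772162 * (p * ((p:ℝ) / x) ^ (1 / (1 + α))))) *
      Ef N (symM l) p ^ 2 := by
  have := symM_prob l
  have hm : 0 < N / B ^ 2 := by positivity
  set m := N / B ^ 2 with hmdef
  have hx0 : 0 < x := by rw [hx]; positivity
  have hp0 : (0:ℝ) < p := by exact_mod_cast hp
  have hp1 : (1:ℝ) ≤ p := by exact_mod_cast hp
  have hα0 : 0 < α := by linarith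
  have hα1 : 0 < 1 + α := by linarith
  have hpx0 : 0 < (p:ℝ) / x := by positivity
  set r := ((p:ℝ) / x) ^ (1 / (1 + α)) with hr
  have hr0 : 0 < r := Real.rpow_pos_of_pos hpx0 _
  have hr1 : r ≤ 1 / 2 ^ 10 := by
    have h1 : (p:ℝ) / x ≤ 1 / 2 ^ 30 := by
      rw [div_le_iff₀ hx0]
      linarith
    calc r ≤ ((1:ℝ) / 2 ^ 30) ^ (1 / (1 + α)) := Real.rpow_le_rpow hpx0.le h1 (by positivity)
      _ ≤ ((1:ℝ) / 2 ^ 30) ^ ((1:ℝ) / 3) := by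
        refine Real.rpow_le_rpow_of_exponent_ge (by positivity) (by norm_num) ?_
        exact one_div_le_one_div_of_le hα1 (by linarith)
      _ = 1 / 2 ^ 10 := by
        rw [show (1:ℝ) / 2 ^ 30 = (1 / 2 ^ 10) ^ (3:ℝ) by norm_num, ← Real.rpow_mul (by positivity)]
        norm_num
  have hrα : r ^ (1 + α) = p / x := by
    rw [hr, ← Real.rpow_mul hpx0.le, one_div_mul_cancel hα1.ne', Real.rpow_one]
  set k0 := (p:ℝ) / r with hk0
  have hk0p : 0 < k0 := by positivity
  have hk0x : k0 = x * r ^ α := by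
    rw [Real.rpow_add hr0, Real.rpow_one] at hrα
    rw [hk0, div_eq_iff hr0.ne', mul_assoc, mul_comm (r ^ α), hrα]
    field_simp
  have hA : k0 ^ (2 / α) = m * r ^ 2 := by
    rw [hk0x, Real.mul_rpow hx0.le (by positivity), hx, ← Real.rpow_mul hm.le, ← Real.rpow_mul hr0.le]
    congr 1
    · rw [show α / 2 * (2 / α) = 1 by field_simp, Real.rpow_one]
    · rw [show α * (2 / α) = 2 by field_simp, Real.rpow_two]
  have hk01 : (p:ℝ) * 2 ^ 10 ≤ k0 := by
    rw [hk0, le_div_iff₀ hr0]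
    nlinarith
  set k := ⌈k0⌉₊ with hk
  have hkl : k0 ≤ k := Nat.le_ceil _
  have hku : (k:ℝ) ≤ 2 * k0 := by
    have := (Nat.ceil_lt_add_one hk0p.le).le
    rw [← hk] at this
    linarith
  have hk0' : (0:ℝ) < k := by linarith
  have hpk : p ≤ k := by
    have : (p:ℝ) ≤ k := by linarith
    exact_mod_cast this
  have hk2 : 2 ≤ k := by
    have : ((2:ℕ):ℝ) ≤ k := by push_cast; linarith
    exact_mod_cast this
  have hkα : (k:ℝ) ^ (2 / α) ≤ 4 * (m * r ^ 2) := by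
    calc (k:ℝ) ^ (2 / α) ≤ (2 * k0) ^ (2 / α) := Real.rpow_le_rpow hk0'.le hku (by positivity)
      _ = 2 ^ (2 / α) * k0 ^ (2 / α) := Real.mul_rpow (by norm_num) hk0p.le
      _ ≤ 4 * (m * r ^ 2) := by
        rw [hA]
        gcongr
        calc (2:ℝ) ^ (2 / α) ≤ 2 ^ (2:ℝ) := by
              refine Real.rpow_le_rpow_of_exponent_le (by norm_num) ?_
              rw [div_le_iff₀ hα0]; linarith
          _ = 4 := by norm_num
  set L := 4 * B * (k:ℝ) ^ (1 / α) with hL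
  have hL0 : 0 < L := by positivity
  have hL2 : L ^ 2 ≤ 64 * (N * r ^ 2) := by
    have : ((k:ℝ) ^ (1 / α)) ^ 2 = (k:ℝ) ^ (2 / α) := by
      rw [← Real.rpow_natCast, ← Real.rpow_mul hk0'.le]
      congr 1
      push_cast; ring
    calc L ^ 2 = 16 * B ^ 2 * (k:ℝ) ^ (2 / α) := by rw [hL, mul_pow, this]; ring
      _ ≤ 16 * B ^ 2 * (4 * (m * r ^ 2)) := by gcongr
      _ = _ := by rw [hmdef]; field_simp; ring
  have hr2 : r ^ 2 ≤ 1 / 2 ^ 20 := by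
    calc r ^ 2 ≤ (1 / 2 ^ 10) ^ 2 := pow_le_pow_left₀ hr0.le hr1 2
      _ = _ := by norm_num
  have hLN : 16384 * L ^ 2 ≤ N := by nlinarith
  refine (key_ineq hN (symM_PL h.pl) (symM_sym l) (symM_fin h hB) p hp hpk hk2 hL0
    (symM_mom h hB k hk2) hLN).trans ?_
  refine mul_le_mul_left (ENNReal.ofReal_le_ofReal (Real.exp_le_exp.2 ?_)) _
  have e1 : 160 * (8192 * L ^ 2) * k / N ≤ 160 * 8192 * 128 * (p * r) := by
    rw [div_le_iff₀ hN]
    calc 160 * (8192 * L ^ 2) * (k:ℝ) ≤ 160 * (8192 * (64 * (N * r ^ 2))) * (2 * k0) := by gcongr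
      _ = _ := by rw [hk0]; field_simp; ring
  have e2 : 2 * (p:ℝ) ^ 2 / k ≤ 2 * (p * r) := by
    rw [div_le_iff₀ hk0']
    calc 2 * (p:ℝ) ^ 2 = 2 * (p * r) * k0 := by rw [hk0]; field_simp
      _ ≤ _ := by gcongr
  linarith

lemma Ef_iter {l : Measure (EuclideanSpace ℝ (Fin n))} [IsProbabilityMeasure l] (h : Good N α B l)
    (hN : 0 < N) (hB : 0 < B) (hα : 1 ≤ α) (hα2 : α ≤ 2) {x : ℝ} (hx : x = (N / B ^ 2) ^ (α / 2))
    (j : ℕ) (hpx : (2:ℝ) ^ (j + 1) ≤ x / 2 ^ 30) :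
    Ef N (symM l) (2 ^ (j + 1)) ≤ ENNReal.ofReal (Real.exp (335544324 *
      ((2:ℝ) ^ (j + 1) * ((2:ℝ) ^ (j + 1) / x) ^ (1 / (1 + α))))) * ENNReal.ofReal (3 * N) ^ (2 ^ j) := by
  have hx0 : 0 < x := by rw [hx]; positivity
  induction j with
  | zero =>
    simp only [zero_add, pow_one, pow_zero]
    rw [Ef_two h hN]
    refine le_mul_of_one_le_left (by simp) ?_
    rw [← ENNReal.ofReal_one]
    refine ENNReal.ofReal_le_ofReal ?_
    exact Real.one_le_exp (by positivity)
  | succ j ih =>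
    have hpx' : (2:ℝ) ^ (j + 1) ≤ x / 2 ^ 30 := by
      refine le_trans ?_ hpx
      exact pow_le_pow_right₀ (by norm_num) (by omega)
    have ih := ih hpx'
    have hs := Ef_step h hN hB hα hα2 hx (2 ^ (j + 1)) (Nat.one_le_two_pow) (by push_cast; exact hpx')
    rw [← pow_succ'] at hs
    push_cast at hs
    refine hs.trans ?_
    set p : ℝ := (2:ℝ) ^ (j + 1) with hp
    have hp0 : 0 < p := by positivity
    have hp2 : (2:ℝ) ^ (j + 1 + 1) = 2 * p := by rw [hp, pow_succ' _ (j+1)]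
    have hγ : (2 * p / x) ^ (1 / (1 + α)) ≥ 5 / 4 * (p / x) ^ (1 / (1 + α)) := by
      rw [mul_div_assoc, Real.mul_rpow (by norm_num) (by positivity)]
      refine mul_le_mul_of_nonneg_right ?_ (by positivity)
      calc (5/4:ℝ) = ((5/4:ℝ) ^ (3:ℝ)) ^ (1/3:ℝ) := by
            rw [← Real.rpow_mul (by norm_num)]; norm_num
        _ ≤ 2 ^ (1/3:ℝ) := Real.rpow_le_rpow (by positivity) (by norm_num) (by norm_num)
        _ ≤ _ := Real.rpow_le_rpow_of_exponent_le (by norm_num)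
            (one_div_le_one_div_of_le (by linarith) (by linarith))
    rw [hp2]
    set r := (p / x) ^ (1 / (1 + α)) with hr
    have hr0 : 0 ≤ r := by positivity
    calc _ ≤ ENNReal.ofReal (Real.exp (167772162 * (p * r))) *
          (ENNReal.ofReal (Real.exp (335544324 * (p * r))) * ENNReal.ofReal (3 * N) ^ (2 ^ j)) ^ 2 := by
          gcongr
      _ = ENNReal.ofReal (Real.exp (167772162 * (p * r) + 2 * (335544324 * (p * r)))) *
          ENNReal.ofReal (3 * N) ^ (2 ^ (j + 1)) := by
          rw [mul_pow, ← pow_mul, ← pow_succ, Real.exp_add,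
            ENNReal.ofReal_mul (Real.exp_nonneg _),
            ← ENNReal.ofReal_pow (Real.exp_nonneg _), ← Real.exp_nat_mul, ← mul_assoc]
          push_cast
          rfl
      _ ≤ _ := by
          refine mul_le_mul_left (ENNReal.ofReal_le_ofReal (Real.exp_le_exp.2 ?_)) _
          have := mul_le_mul_of_nonneg_left hγ hp0.le
          nlinarith

end

section
variable {k n : ℕ} {N α B : ℝ}
local notation "EE" => EuclideanSpace ℝ (Fin n)

lemma tail_basic {l : Measure (EuclideanSpace ℝ (Fin n))} [IsProbabilityMeasure l] (h : Good N α B l)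
    (hN : 0 < N) (j : ℕ) (t : ℝ) (ht : 0 ≤ t) (ht1 : t ≤ 1) (D : ℝ)
    (hD : Ef N (symM l) (2 ^ (j + 1)) ≤ ENNReal.ofReal (Real.exp D) * ENNReal.ofReal (3 * N) ^ (2 ^ j)) :
    l {y | (1 + t) * Real.sqrt N ≤ ‖y‖} ≤ ENNReal.ofReal (Real.exp (D - 2 ^ (j + 1) * t / 5)) := by
  have hm := (markov_Ef h hN j t ht).trans hD
  have h1 : 3 * N * Real.exp (2 * t / 5) ≤ (2 + (1 + t) ^ 2) * N := by
    have h2 : Real.exp (2 * t / 5) ≤ 1 + 2 * t / 3 := by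
      have h3 := Real.add_one_le_exp (-(2 * t / 5))
      have h4 : Real.exp (2 * t / 5) * Real.exp (-(2 * t / 5)) = 1 := by
        rw [← Real.exp_add]; simp
      have h5 : Real.exp (2 * t / 5) * (1 - 2 * t / 5) ≤ 1 := by
        rw [← h4]
        exact mul_le_mul_of_nonneg_left (by linarith) (Real.exp_nonneg _)
      have h6 : 1 ≤ (1 + 2 * t / 3) * (1 - 2 * t / 5) := by nlinarith
      have h7 : 0 < 1 - 2 * t / 5 := by linarith
      exact le_of_mul_le_mul_right (h5.trans h6) h7
    nlinarith [mul_le_mul_of_nonneg_left h2 hN.le, mul_nonneg hN.le (sq_nonneg t)]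
  set a := ENNReal.ofReal (3 * N) ^ (2 ^ j) with ha
  have ha0 : a ≠ 0 := by
    refine pow_ne_zero _ ?_
    simpa using hN
  have hat : a ≠ ∞ := ENNReal.pow_ne_top ENNReal.ofReal_ne_top
  have h8 : a * ENNReal.ofReal (Real.exp (2 ^ (j + 1) * t / 5)) ≤
      ENNReal.ofReal ((2 + (1 + t) ^ 2) * N) ^ (2 ^ j) := by
    have e : Real.exp (2 ^ (j + 1) * t / 5) = Real.exp (2 * t / 5) ^ (2 ^ j) := by
      rw [← Real.exp_nat_mul]
      congr 1
      push_cast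
      ring
    rw [e, ENNReal.ofReal_pow (by positivity), ha, ← mul_pow, ← ENNReal.ofReal_mul (by positivity)]
    exact pow_le_pow_left₀ (by simp) (ENNReal.ofReal_le_ofReal h1) _
  set T := l {y | (1 + t) * Real.sqrt N ≤ ‖y‖} with hT
  set E := ENNReal.ofReal (Real.exp (2 ^ (j + 1) * t / 5)) with hE
  have h9 : T * E * a ≤ ENNReal.ofReal (Real.exp D) * a := by
    calc T * E * a = T * (a * E) := by ring
      _ ≤ _ := mul_le_mul_right h8 _
      _ ≤ _ := hm
  have h10 := (ENNReal.mul_le_mul_iff_left ha0 hat).1 h9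
  have hE' : E * ENNReal.ofReal (Real.exp (-(2 ^ (j + 1) * t / 5))) = 1 := by
    rw [hE, ← ENNReal.ofReal_mul (by positivity), ← Real.exp_add]; simp
  calc T = T * E * ENNReal.ofReal (Real.exp (-(2 ^ (j + 1) * t / 5))) := by rw [mul_assoc, hE', mul_one]
    _ ≤ ENNReal.ofReal (Real.exp D) * ENNReal.ofReal (Real.exp (-(2 ^ (j + 1) * t / 5))) :=
      mul_le_mul_left h10 _
    _ = _ := by rw [← ENNReal.ofReal_mul (by positivity), ← Real.exp_add, sub_eq_add_neg]

/-- the constant `10 K` -/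
def KK : ℝ := 3355443240

lemma tail_small {l : Measure (EuclideanSpace ℝ (Fin n))} [IsProbabilityMeasure l] (h : Good N α B l)
    (hN : 0 < N) (hB : 0 < B) (hα : 1 ≤ α) (hα2 : α ≤ 2) (t : ℝ) (ht : 0 ≤ t) (ht1 : t ≤ 1) :
    l {y | (1 + t) * Real.sqrt N ≤ ‖y‖} ≤
      ENNReal.ofReal (Real.exp (-(1 / (20 * KK ^ 3) * (N / B ^ 2) ^ (α / 2) * t ^ (2 + α)))) := by
  obtain ⟨x, hx⟩ : ∃ x, x = (N / B ^ 2) ^ (α / 2) := ⟨_, rfl⟩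
  have hx0 : 0 < x := by rw [hx]; positivity
  rw [← hx]
  have hKK : (0:ℝ) < KK := by unfold KK; norm_num
  have hα1 : 0 < 1 + α := by linarith
  set y := x * t ^ (1 + α) / KK ^ 3 with hy
  have hty : t ^ (2 + α) = t ^ (1 + α) * t := by
    rcases ht.eq_or_lt with h0 | h0
    · rw [← h0, Real.zero_rpow (by linarith), mul_zero]
    · rw [show 2 + α = (1 + α) + 1 by ring, Real.rpow_add h0, Real.rpow_one]
  have hexp : 1 / (20 * KK ^ 3) * x * t ^ (2 + α) = y * t / 20 := by
    rw [hty, hy]; field_simp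
  rw [hexp]
  rcases lt_or_ge y 2 with hy2 | hy2
  · refine (tail_basic h hN 0 t ht ht1 0 ?_).trans ?_
    · simp only [zero_add, pow_one, pow_zero]
      rw [Ef_two h hN]; simp
    · refine ENNReal.ofReal_le_ofReal (Real.exp_le_exp.2 ?_)
      simp only [zero_add, pow_one]
      nlinarith
  · obtain ⟨j, hj1, hj2⟩ := exists_nat_pow_near (x := y / 2) (y := 2) (by linarith) (by norm_num)
    have hp1 : (2:ℝ) ^ (j + 1) ≤ y := by rw [pow_succ]; linarith
    have hp2 : y / 2 < (2:ℝ) ^ (j + 1) := hj2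
    have ht' : t ^ (1 + α) ≤ 1 := Real.rpow_le_one ht ht1 hα1.le
    have hpx : (2:ℝ) ^ (j + 1) ≤ x / 2 ^ 30 := by
      refine hp1.trans ?_
      rw [hy]
      calc x * t ^ (1 + α) / KK ^ 3 ≤ x * 1 / KK ^ 3 := by gcongr
        _ ≤ x / 2 ^ 30 := by
          rw [mul_one]
          refine div_le_div_of_nonneg_left hx0.le (by norm_num) ?_
          unfold KK; norm_num
    refine (tail_basic h hN j t ht ht1 _ (Ef_iter h hN hB hα hα2 hx j hpx)).trans ?_
    refine ENNReal.ofReal_le_ofReal (Real.exp_le_exp.2 ?_)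
    set p := (2:ℝ) ^ (j + 1) with hp
    have hp0 : 0 < p := by positivity
    have hr : (p / x) ^ (1 / (1 + α)) ≤ t / KK := by
      have h1 : p / x ≤ (t / KK) ^ (1 + α) := by
        rw [div_le_iff₀ hx0, Real.div_rpow ht hKK.le]
        refine hp1.trans ?_
        rw [hy, mul_comm x, mul_div_right_comm]
        refine mul_le_mul_of_nonneg_right ?_ hx0.le
        refine div_le_div_of_nonneg_left (by positivity) (by positivity) ?_
        rw [← Real.rpow_natCast]
        refine Real.rpow_le_rpow_of_exponent_le (by unfold KK; norm_num) ?_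
        push_cast; linarith
      calc (p / x) ^ (1 / (1 + α)) ≤ ((t / KK) ^ (1 + α)) ^ (1 / (1 + α)) :=
            Real.rpow_le_rpow (by positivity) h1 (by positivity)
        _ = t / KK := by
          rw [← Real.rpow_mul (by positivity), mul_one_div_cancel hα1.ne', Real.rpow_one]
    have h2 : 335544324 * (p * (p / x) ^ (1 / (1 + α))) ≤ p * t / 10 := by
      calc 335544324 * (p * (p / x) ^ (1 / (1 + α))) ≤ 335544324 * (p * (t / KK)) := by gcongr
        _ = p * t / 10 := by unfold KK; ring
    nlinarith

lemma cheb_quarter {l : Measure (EuclideanSpace ℝ (Fin n))} [IsProbabilityMeasure l] (h : Good N α B l)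
    (hN : 0 < N) : l.real {y | 2 * Real.sqrt N ≤ ‖y‖} ≤ 1 / 4 := by
  have h1 := mul_meas_ge_le_integral_of_nonneg (μ := l) (f := fun y : EE => ‖y‖ ^ 2)
    (Filter.Eventually.of_forall fun y => by positivity) h.int2 (4 * N)
  rw [h.var] at h1
  have h2 : {y : EE | 4 * N ≤ ‖y‖ ^ 2} = {y | 2 * Real.sqrt N ≤ ‖y‖} := by
    ext y
    simp only [Set.mem_ofPred_eq]
    rw [show 4 * N = (2 * Real.sqrt N) ^ 2 by rw [mul_pow, Real.sq_sqrt hN.le]; norm_num]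
    exact pow_le_pow_iff_left₀ (by positivity) (by positivity) (by norm_num)
  rw [h2] at h1
  nlinarith

lemma borell_step {l : Measure (EuclideanSpace ℝ (Fin n))} [IsProbabilityMeasure l] (h : PL1 l)
    (R a : ℝ) : l.real {y | 2 * a + R ≤ ‖y‖} * l.real {y | ‖y‖ < R} ≤ l.real {y | a ≤ ‖y‖} ^ 2 := by
  have m1 : ∀ a : ℝ, MeasurableSet {y : EE | a ≤ ‖y‖} := fun a => measurableSet_le (by fun_prop) (by fun_prop)
  have m2 : MeasurableSet {y : EE | ‖y‖ < R} := measurableSet_lt (by fun_prop) (by fun_prop)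
  have h1 := h (Set.indicator {y | 2 * a + R ≤ ‖y‖} 1) (Set.indicator {y | ‖y‖ < R} 1)
    (Set.indicator {y | a ≤ ‖y‖} 1) (measurable_one.indicator (m1 _)) (measurable_one.indicator m2)
    (measurable_one.indicator (m1 _)) ?_
  · rw [lintegral_indicator_one (m1 _), lintegral_indicator_one m2, lintegral_indicator_one (m1 _)] at h1
    have h2 := ENNReal.toReal_mono (ENNReal.pow_ne_top (measure_ne_top _ _)) h1
    rw [ENNReal.toReal_mul, ENNReal.toReal_pow] at h2
    exact h2
  · intro x y
    by_cases hx : 2 * a + R ≤ ‖x‖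
    · by_cases hy : ‖y‖ < R
      · have : a ≤ ‖(1/2:ℝ) • (x + y)‖ := by
          rw [norm_smul]
          have h3 : ‖x‖ ≤ ‖x + y‖ + ‖y‖ := by
            have := norm_sub_le (x + y) y
            simpa using this
          norm_num
          linarith
        rw [Set.indicator_of_mem (by exact hx), Set.indicator_of_mem (by exact hy),
          Set.indicator_of_mem (by exact this)]
        simp
      · rw [Set.indicator_of_notMem (s := {y : EE | ‖y‖ < R}) (by exact hy)]; simp
    · rw [Set.indicator_of_notMem (s := {y : EE | 2 * a + R ≤ ‖y‖}) (by exact hx)]; simp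

lemma tail_large {l : Measure (EuclideanSpace ℝ (Fin n))} [IsProbabilityMeasure l] (h : Good N α B l)
    (hN : 0 < N) (s : ℝ) (hs : 0 ≤ s)
    (h1 : l.real {y | 2 * Real.sqrt N ≤ ‖y‖} ≤ Real.exp (-s)) (t : ℝ) (ht : 1 ≤ t) :
    l.real {y | (1 + t) * Real.sqrt N ≤ ‖y‖} ≤ Real.exp (-(s * t / 16)) := by
  set R := 2 * Real.sqrt N with hR
  have hR0 : 0 ≤ R := by positivity
  set q := l.real {y | R ≤ ‖y‖} with hq
  have hq0 : 0 ≤ q := measureReal_nonneg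
  have hq4 : q ≤ 1 / 4 := cheb_quarter h hN
  set θ := l.real {y | ‖y‖ < R} with hθ
  have hθq : 3 / 4 ≤ θ := by
    have : θ + q = 1 := by
      have m1 : MeasurableSet {y : EE | ‖y‖ < R} := measurableSet_lt (by fun_prop) (by fun_prop)
      have h2 := probReal_add_probReal_compl (μ := l) m1
      have h3 : {y : EE | ‖y‖ < R}ᶜ = {y : EE | R ≤ ‖y‖} := by
        ext y
        simp
      rw [h3] at h2
      exact h2
    linarith
  have hθ1 : θ ≤ 1 := measureReal_le_one
  set e := Real.exp (-(s / 2)) with he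
  have he0 : 0 < e := Real.exp_pos _
  have hqe : q ≤ θ * e := by
    have h3 : q ≤ e ^ 2 := by
      refine h1.trans (le_of_eq ?_)
      rw [he, ← Real.exp_nat_mul]; congr 1; push_cast; ring
    have h4 : q ≤ 1 / 2 * e := by
      by_contra hc
      push Not at hc
      nlinarith
    nlinarith
  have hind : ∀ j : ℕ, l.real {y | (2 ^ (j + 1) - 1) * R ≤ ‖y‖} ≤ θ * e ^ (2 ^ j) := by
    intro j
    induction j with
    | zero =>
      norm_num
      exact hqe
    | succ j ih =>
      have h5 := borell_step h.pl R ((2 ^ (j + 1) - 1) * R)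
      rw [show 2 * ((2 ^ (j + 1) - 1) * R) + R = (2 ^ (j + 1 + 1) - 1) * R by rw [pow_succ _ (j+1)]; ring] at h5
      have h6 := h5.trans (pow_le_pow_left₀ measureReal_nonneg ih 2)
      rw [mul_pow, ← pow_mul, ← pow_succ] at h6
      have hθ0 : 0 < θ := by linarith
      refine le_of_mul_le_mul_right ?_ hθ0
      refine h6.trans (le_of_eq ?_)
      ring
  obtain ⟨j, hj1, hj2⟩ := exists_nat_pow_near (x := (3 + t) / 4) (y := 2) (by linarith) (by norm_num)
  have hsub : {y : EE | (1 + t) * Real.sqrt N ≤ ‖y‖} ⊆ {y | (2 ^ (j + 1) - 1) * R ≤ ‖y‖} := by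
    intro y hy
    have hy : (1 + t) * Real.sqrt N ≤ ‖y‖ := hy
    refine le_trans ?_ hy
    rw [hR, ← mul_assoc]
    refine mul_le_mul_of_nonneg_right ?_ (Real.sqrt_nonneg _)
    rw [pow_succ]
    linarith
  refine (measureReal_mono hsub).trans ((hind j).trans ?_)
  have h7 : θ * e ^ (2 ^ j) ≤ e ^ (2 ^ j) := by
    have : 0 ≤ e ^ (2 ^ j) := by positivity
    nlinarith
  refine h7.trans ?_
  rw [he, ← Real.exp_nat_mul]
  refine Real.exp_le_exp.2 ?_
  push_cast
  rw [pow_succ] at hj2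
  nlinarith

theorem tail_all {l : Measure (EuclideanSpace ℝ (Fin n))} [IsProbabilityMeasure l] (h : Good N α B l)
    (hN : 0 < N) (hB : 0 < B) (hα : 1 ≤ α) (hα2 : α ≤ 2) (t : ℝ) (ht : 0 ≤ t) :
    l {y | (1 + t) * Real.sqrt N ≤ ‖y‖} ≤
      ENNReal.ofReal (Real.exp (-(1 / (320 * KK ^ 3) * (N / B ^ 2) ^ (α / 2) * min (t ^ (2 + α)) t))) := by
  have hKK : (0:ℝ) < KK := by unfold KK; norm_num
  have hx0 : 0 < (N / B ^ 2) ^ (α / 2) := by positivity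
  rcases le_total t 1 with ht1 | ht1
  · refine (tail_small h hN hB hα hα2 t ht ht1).trans ?_
    refine ENNReal.ofReal_le_ofReal (Real.exp_le_exp.2 (neg_le_neg ?_))
    have h1 : 0 ≤ min (t ^ (2 + α)) t := le_min (by positivity) ht
    have h2 : 1 / (320 * KK ^ 3) ≤ 1 / (20 * KK ^ 3) :=
      one_div_le_one_div_of_le (by positivity) (by nlinarith [pow_pos hKK 3])
    gcongr
    exact min_le_left _ _
  · set x := (N / B ^ 2) ^ (α / 2) with hx
    have h1 := tail_small h hN hB hα hα2 1 zero_le_one le_rfl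
    rw [Real.one_rpow, mul_one, ← hx] at h1
    have h2 : l.real {y | 2 * Real.sqrt N ≤ ‖y‖} ≤ Real.exp (-(1 / (20 * KK ^ 3) * x)) := by
      have h3 := ENNReal.toReal_mono ENNReal.ofReal_ne_top h1
      rw [ENNReal.toReal_ofReal (Real.exp_nonneg _)] at h3
      norm_num at h3 ⊢
      exact h3
    have h4 := tail_large h hN _ (by positivity) h2 t ht1
    have h5 : l {y | (1 + t) * Real.sqrt N ≤ ‖y‖} =
      ENNReal.ofReal (l.real {y | (1 + t) * Real.sqrt N ≤ ‖y‖}) := by simp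
    rw [h5]
    refine ENNReal.ofReal_le_ofReal (h4.trans (Real.exp_le_exp.2 (neg_le_neg ?_)))
    have e : 1 / (20 * KK ^ 3) * x * t / 16 = 1 / (320 * KK ^ 3) * x * t := by
      field_simp; norm_num
    rw [e]
    gcongr
    exact min_le_right _ _
end

/-- sharp positive large-deviation estimate for `|AX|`. -/
theorem statement3 :
    ∃ c : ℝ, 0 < c ∧
      ∀ (n : ℕ) (Ω : Type) (_mΩ : MeasurableSpace Ω) (P : Measure Ω),
        IsProbabilityMeasure P →
        ∀ (X : Ω → EuclideanSpace ℝ (Fin n)) (f : EuclideanSpace ℝ (Fin n) → ℝ)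
          (α b : ℝ) (A : Matrix (Fin n) (Fin n) ℝ),
          HasDensityFn P X f → IsLogConcaveFn f → Isotropic P X →
          1 ≤ α → α ≤ 2 → IsPsiAlpha P X α b →
          hsNorm A ^ 2 = n →
          ∀ t : ℝ, 0 ≤ t →
            P {ω | (1 + t) * Real.sqrt n ≤ ‖mApp A (X ω)‖} ≤
              ENNReal.ofReal (Real.exp
                (-(c * ((n : ℝ) / (opNorm A ^ 2 * b ^ 2)) ^ (α/2) *
                  min (t ^ (2 + α)) t))) := by
  refine ⟨1 / (320 * KK ^ 3), by unfold KK; norm_num, ?_⟩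
  intro n Ω _mΩ P hP X f α b A hd hf hI hα hα2 hψ hA t ht
  rcases Nat.eq_zero_or_pos n with hn | hn
  · refine prob_le_one.trans ?_
    rw [← ENNReal.ofReal_one]
    refine ENNReal.ofReal_le_ofReal ?_
    have h0 : ((n : ℝ) / (opNorm A ^ 2 * b ^ 2)) ^ (α/2) = 0 := by
      have hn0 : (n : ℝ) = 0 := by exact_mod_cast hn
      rw [hn0, zero_div, Real.zero_rpow (by linarith)]
    rw [h0]
    simp
  · obtain ⟨hB, hG⟩ := good_of hd hf hI hψ A hA hn
    have hmeas : Measurable (fun ω => mApp A (X ω)) := (mApp_meas A).comp hd.1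
    have hl : IsProbabilityMeasure (P.map (fun ω => mApp A (X ω))) :=
      Measure.isProbabilityMeasure_map hmeas.aemeasurable
    have h := tail_all hG (by exact_mod_cast hn) hB hα hα2 t ht
    rw [Measure.map_apply hmeas (measurableSet_le (by fun_prop) (by fun_prop)), mul_pow,
      mul_comm (b ^ 2)] at h
    exact h
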